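/- arXiv:2601.21585 — 6 statements merged into one kernel-verified Lean document; each statement's English description precedes it below -/
import Mathlib

section
/- Let H be a real Banach space with a direct sum decomposition H = H₁ ⊕ H₂ into closed complementary subspaces, where H₁ is finite dimensional. Let ψ : H → ℝ be a C¹ functional with ψ(0) = 0 which satisfies the Palais–Smale condition. Suppose there exists δ > 0 such that: (P1) ψ(u) ≤ 0 for every u ∈ H₁ with ‖u‖ ≤ δ; (P2) ψ(u) ≥ 0 for every u ∈ H₂ with ‖u‖ ≤ δ; (P3) ψ is bounded below and inf_H ψ < 0. Then ψ has at least two critical points different from 0, i.e. there exist u, v ∈ H with u ≠ 0, v ≠ 0, u ≠ v, and ψ'(u) = 0, ψ'(v) = 0. -/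
/-
By Ekeland's variational principle on complete spaces of continuous maps, the minimax value of `ψ`
over a class of maps stable under pushing `ψ` down is, under the Palais–Smale condition, a critical
value. In particular `ψ` attains its minimum at some `u₀` with `ψ u₀ < 0`. If `0` and `u₀` were the
only critical points, minimaxing over the deformations of a small sphere of `H₁` would contract that
sphere to `u₀` through points where `ψ < 0`. The contraction fills the sphere by a cap, and the cap
and the flat ball in `H₁` are joined by a map of a cylinder. By Brouwer's theorem every map of this
cylinder with the same boundary values meets the sphere of radius `δ` in `H₂`, so minimaxing over
these maps yields a critical point `u ≠ 0` with `0 ≤ ψ u`, which cannot be `u₀`. When the minimax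
level is `0`, adding a small bump around the sphere in `H₂` locates the critical point on it.

Brouwer's theorem is obtained from the Milnor–Rogers volume argument.
-/

open Set Filter Topology MeasureTheory
open scoped NNReal Polynomial

section RadialRetraction

variable {E : Type*} [NormedAddCommGroup E] [NormedSpace ℝ E] {R : ℝ}

/-- The radial retraction of a normed space onto the closed ball of radius `R > 0` about the
origin. -/
noncomputable def radialRetraction (R : ℝ) (x : E) : E :=
  (R / max R ‖x‖) • x

lemma radialRetraction_of_norm_le (hR : 0 < R) {x : E} (hx : ‖x‖ ≤ R) :
    radialRetraction R x = x := by
  rw [radialRetraction, max_eq_left hx, div_self hR.ne', one_smul]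

lemma norm_radialRetraction_of_le_norm (hR : 0 < R) {x : E} (hx : R ≤ ‖x‖) :
    ‖radialRetraction R x‖ = R := by
  have hx₀ : 0 < ‖x‖ := hR.trans_le hx
  rw [radialRetraction, max_eq_right hx, norm_smul, Real.norm_of_nonneg (by positivity),
    div_mul_cancel₀ _ hx₀.ne']

lemma norm_radialRetraction_le (hR : 0 < R) (x : E) : ‖radialRetraction R x‖ ≤ R := by
  rcases le_total ‖x‖ R with hx | hx
  · rwa [radialRetraction_of_norm_le hR hx]
  · exact (norm_radialRetraction_of_le_norm hR hx).le

lemma lipschitzWith_radialRetraction (hR : 0 < R) :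
    LipschitzWith 2 (radialRetraction R : E → E) := by
  refine LipschitzWith.of_dist_le_mul fun x y => ?_
  rw [dist_eq_norm, dist_eq_norm, NNReal.coe_ofNat]
  set m := max R ‖x‖
  set n := max R ‖y‖
  have hm : 0 < m := hR.trans_le (le_max_left _ _)
  have hn : 0 < n := hR.trans_le (le_max_left _ _)
  have hRm : R / m ≤ 1 := (div_le_one hm).2 (le_max_left _ _)
  have hyn : ‖y‖ / n ≤ 1 := (div_le_one hn).2 (le_max_right _ _)
  have hnm : |n - m| ≤ ‖x - y‖ := by
    have := abs_max_sub_max_le_max R ‖y‖ R ‖x‖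
    rw [sub_self, abs_zero, max_eq_right (abs_nonneg (‖y‖ - ‖x‖))] at this
    exact this.trans (norm_sub_rev x y ▸ abs_norm_sub_norm_le y x)
  have hsplit : radialRetraction R x - radialRetraction R y
      = (R / m) • (x - y) + (R / m * ((n - m) / n)) • y := by
    have : R / m * ((n - m) / n) = R / m - R / n := by field_simp
    rw [this]
    simp only [radialRetraction, m, n]
    module
  calc ‖radialRetraction R x - radialRetraction R y‖
      ≤ R / m * ‖x - y‖ + R / m * (|n - m| * (‖y‖ / n)) := by
        rw [hsplit]
        refine (norm_add_le _ _).trans_eq ?_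
        rw [norm_smul, norm_smul, norm_mul, norm_div, norm_div, Real.norm_eq_abs (n - m),
          Real.norm_of_nonneg hR.le, Real.norm_of_nonneg hm.le, Real.norm_of_nonneg hn.le]
        ring
    _ ≤ 1 * ‖x - y‖ + 1 * (‖x - y‖ * 1) := by gcongr
    _ = 2 * ‖x - y‖ := by ring

lemma exists_lipschitzWith_comp_radialRetraction [FiniteDimensional ℝ E] {F : Type*}
    [NormedAddCommGroup F] [NormedSpace ℝ F] (hR : 0 < R) {g : E → F} (hg : ContDiff ℝ 1 g) :
    ∃ C : ℝ≥0, LipschitzWith C fun x => g (radialRetraction R x) := by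
  obtain ⟨C, hC⟩ := hg.contDiffOn.exists_lipschitzOnWith one_ne_zero (convex_closedBall (0 : E) R)
    (isCompact_closedBall 0 R)
  refine ⟨C * 2, lipschitzOnWith_univ.1 <|
    hC.comp (lipschitzWith_radialRetraction hR).lipschitzOnWith fun x _ => ?_⟩
  exact mem_closedBall_zero_iff.2 (norm_radialRetraction_le hR x)

end RadialRetraction

section Brouwer

lemma exists_polynomial_eval_eq_det_id_add_smul {E : Type*} [NormedAddCommGroup E]
    [NormedSpace ℝ E] [FiniteDimensional ℝ E] (A : E →L[ℝ] E) :
    ∃ q : ℝ[X], q.natDegree ≤ Module.finrank ℝ E ∧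
      ∀ t : ℝ, q.eval t = (ContinuousLinearMap.id ℝ E + t • A).det := by
  classical
  let b := Module.finBasis ℝ E
  let M := LinearMap.toMatrix b b (A : E →ₗ[ℝ] E)
  refine ⟨_, (Polynomial.natDegree_det_X_add_C_le M 1).trans_eq (Fintype.card_fin _), fun t => ?_⟩
  have hM : LinearMap.toMatrix b b ((LinearMap.id : E →ₗ[ℝ] E) + t • (A : E →ₗ[ℝ] E))
      = 1 + t • M := by
    rw [map_add, LinearMap.toMatrix_id, map_smul]
  change _ = LinearMap.det ((LinearMap.id : E →ₗ[ℝ] E) + t • (A : E →ₗ[ℝ] E))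
  rw [← LinearMap.det_toMatrix b, hM, ← Polynomial.coe_evalRingHom, RingHom.map_det]
  congr 1
  ext i j
  by_cases hij : i = j <;> simp [hij] <;> ring

lemma exists_extrapolation_weights (d : ℕ) {τ : ℝ} (hτ : 0 < τ) :
    ∃ (s : Finset ℝ) (w : ℝ → ℝ), (∀ t ∈ s, t ∈ Ioo 0 τ) ∧
      ∀ q : ℝ[X], q.natDegree ≤ d → q.eval 1 = ∑ t ∈ s, w t * q.eval t := by
  obtain ⟨s, hs, hcard⟩ := (Ioo_infinite hτ).exists_subset_card_eq (d + 1)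
  refine ⟨s, fun t => (Lagrange.basis s id t).eval 1, hs, fun q hq => ?_⟩
  have hdeg : q.degree < s.card := by
    rw [hcard]
    exact Polynomial.degree_le_natDegree.trans_lt (by exact_mod_cast Nat.lt_succ_of_le hq)
  conv_lhs => rw [Lagrange.eq_interpolate_of_eval_eq (v := id) (fun t => q.eval t)
    Function.injective_id.injOn hdeg fun _ _ => rfl]
  simp only [Lagrange.interpolate_apply, Polynomial.eval_finsetSum, Polynomial.eval_mul,
    Polynomial.eval_C]
  exact Finset.sum_congr rfl fun t _ => mul_comm _ _

lemma bijective_id_add_of_lipschitzWith {E : Type*} [NormedAddCommGroup E] [CompleteSpace E]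
    {c : ℝ≥0} {G : E → E} (hG : LipschitzWith c G) (hc : c < 1) :
    Function.Bijective fun x => x + G x := by
  refine (Function.bijective_iff_existsUnique _).2 fun y => ?_
  have hcontr : ContractingWith c fun x => y - G x :=
    ⟨hc, by simpa using (LipschitzWith.const y).sub hG⟩
  refine ⟨_, eq_sub_iff_add_eq.1 hcontr.fixedPoint_isFixedPt.symm, fun x hx => ?_⟩
  exact hcontr.fixedPoint_unique (eq_sub_iff_add_eq.2 hx).symm

lemma image_eq_of_bijective_of_eqOn_compl {α : Type*} {f : α → α} {s : Set α}
    (hf : f.Bijective) (hs : ∀ x ∉ s, f x = x) : f '' s = s := by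
  rw [← compl_inj_iff, ← image_compl_eq hf]
  exact image_congr hs |>.trans (image_id' _)

section Volume

variable {E : Type*} [NormedAddCommGroup E] [NormedSpace ℝ E]
  {g : E → E} {R : ℝ}

lemma continuous_det_id_add_smul_fderiv (hg : ContDiff ℝ 1 g) :
    Continuous fun p : ℝ × E => (ContinuousLinearMap.id ℝ E + p.1 • fderiv ℝ g p.2).det :=
  ContinuousLinearMap.continuous_det.comp <| continuous_const.add <|
    continuous_fst.smul ((hg.continuous_fderiv one_ne_zero).comp continuous_snd)

variable [FiniteDimensional ℝ E]

lemma eventually_forall_det_id_add_smul_fderiv_pos (hg : ContDiff ℝ 1 g) :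
    ∀ᶠ t in 𝓝 (0 : ℝ), ∀ x ∈ Metric.closedBall (0 : E) R,
      0 < (ContinuousLinearMap.id ℝ E + t • fderiv ℝ g x).det := by
  refine (isCompact_closedBall 0 R).eventually_forall_of_forall_eventually fun x _ => ?_
  refine (continuous_det_id_add_smul_fderiv hg).continuousAt.eventually_const_lt ?_
  simp [ContinuousLinearMap.det]

lemma eventually_bijective_id_add_smul_comp_radialRetraction (hR : 0 < R) (hg : ContDiff ℝ 1 g) :
    ∀ᶠ t in 𝓝 (0 : ℝ), Function.Bijective fun x => x + t • g (radialRetraction R x) := by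
  obtain ⟨C, hC⟩ := exists_lipschitzWith_comp_radialRetraction hR hg
  have hsmall : ∀ᶠ t in 𝓝 (0 : ℝ), ‖t‖₊ * C < 1 := by
    refine (show Continuous fun t : ℝ => ‖t‖₊ * C by fun_prop).continuousAt.eventually_lt_const ?_
    simp
  filter_upwards [hsmall] with t ht
  exact bijective_id_add_of_lipschitzWith ((lipschitzWith_smul t).comp hC) ht

variable [MeasurableSpace E] [BorelSpace E] (μ : Measure E) [μ.IsAddHaarMeasure]

-- For small `t` the map `x ↦ x + t • g x` is a bijection of the ball with positive Jacobian.
lemma eventually_integral_det_id_add_smul_fderiv (hR : 0 < R) (hg : ContDiff ℝ 1 g)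
    (hgR : ∀ x, ‖x‖ = R → g x = 0) :
    ∀ᶠ t in 𝓝 (0 : ℝ), ∫ x in Metric.ball (0 : E) R,
      (ContinuousLinearMap.id ℝ E + t • fderiv ℝ g x).det ∂μ = μ.real (Metric.ball 0 R) := by
  filter_upwards [eventually_bijective_id_add_smul_comp_radialRetraction hR hg,
    eventually_forall_det_id_add_smul_fderiv_pos (R := R) hg] with t hbij hdet
  have hdet' : ∀ x ∈ Metric.ball (0 : E) R,
      0 < (ContinuousLinearMap.id ℝ E + t • fderiv ℝ g x).det := fun x hx =>
    hdet x (Metric.ball_subset_closedBall hx)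
  have himage : (fun x => x + t • g (radialRetraction R x)) '' Metric.ball (0 : E) R
      = Metric.ball (0 : E) R := by
    refine image_eq_of_bijective_of_eqOn_compl hbij fun x hx => ?_
    rw [mem_ball_zero_iff, not_lt] at hx
    rw [hgR _ (norm_radialRetraction_of_le_norm hR hx), smul_zero, add_zero]
  have hderiv : ∀ x ∈ Metric.ball (0 : E) R,
      HasFDerivWithinAt (fun x => x + t • g (radialRetraction R x))
        (ContinuousLinearMap.id ℝ E + t • fderiv ℝ g x) (Metric.ball (0 : E) R) x := by
    have hcongr : ∀ x ∈ Metric.ball (0 : E) R,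
        x + t • g (radialRetraction R x) = x + t • g x := fun x hx => by
      rw [radialRetraction_of_norm_le hR (mem_ball_zero_iff.1 hx).le]
    intro x hx
    have hgx := (hg.differentiable one_ne_zero x).hasFDerivAt
    exact ((hasFDerivAt_id x).add (hgx.const_smul t)).hasFDerivWithinAt.congr hcongr (hcongr x hx)
  have hvolume := lintegral_abs_det_fderiv_eq_addHaar_image μ measurableSet_ball hderiv
    hbij.injective.injOn
  rw [himage] at hvolume
  rw [integral_eq_lintegral_of_nonneg_ae
    (ae_restrict_of_forall_mem measurableSet_ball fun x hx => (hdet' x hx).le)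
    ((continuous_det_id_add_smul_fderiv hg).comp
      (Continuous.prodMk_right t)).aestronglyMeasurable, measureReal_def, ← hvolume]
  congr 1
  exact setLIntegral_congr_fun measurableSet_ball fun x hx => by rw [abs_of_pos (hdet' x hx)]

-- Both sides are polynomials in `t` when `fderiv ℝ g x` is replaced by `t • fderiv ℝ g x`, and they
-- agree for small `t`; the case `t = 1` follows by extrapolation.
lemma integral_det_id_add_fderiv (hR : 0 < R) (hg : ContDiff ℝ 1 g)
    (hgR : ∀ x, ‖x‖ = R → g x = 0) :
    ∫ x in Metric.ball (0 : E) R, (ContinuousLinearMap.id ℝ E + fderiv ℝ g x).det ∂μ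
      = μ.real (Metric.ball 0 R) := by
  obtain ⟨τ, hτ, hsmall⟩ := mem_nhdsGT_iff_exists_Ioo_subset.1 <|
    mem_nhdsWithin_of_mem_nhds (eventually_integral_det_id_add_smul_fderiv μ hR hg hgR)
  obtain ⟨s, w, hs, hw⟩ := exists_extrapolation_weights (Module.finrank ℝ E) hτ
  have hdet : ∀ x, (ContinuousLinearMap.id ℝ E + fderiv ℝ g x).det
      = ∑ t ∈ s, w t * (ContinuousLinearMap.id ℝ E + t • fderiv ℝ g x).det := fun x => by
    obtain ⟨q, hdeg, hq⟩ := exists_polynomial_eval_eq_det_id_add_smul (fderiv ℝ g x)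
    simpa only [hq, one_smul] using hw q hdeg
  have hsum : ∑ t ∈ s, w t = 1 := by simpa using (hw 1 (by simp)).symm
  have hint : ∀ t, IntegrableOn
      (fun x => (ContinuousLinearMap.id ℝ E + t • fderiv ℝ g x).det) (Metric.ball 0 R) μ :=
    fun t => (((continuous_det_id_add_smul_fderiv hg).comp
      (Continuous.prodMk_right t)).continuousOn.integrableOn_compact
      (isCompact_closedBall 0 R)).mono_set Metric.ball_subset_closedBall
  simp only [hdet]
  rw [integral_finsetSum _ fun t _ => (hint t).const_mul _]
  calc ∑ t ∈ s, ∫ x in Metric.ball (0 : E) R,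
        w t * (ContinuousLinearMap.id ℝ E + t • fderiv ℝ g x).det ∂μ
      = ∑ t ∈ s, w t * μ.real (Metric.ball 0 R) :=
        Finset.sum_congr rfl fun t ht => by rw [integral_const_mul, hsmall (hs t ht)]
    _ = μ.real (Metric.ball 0 R) := by rw [← Finset.sum_mul, hsum, one_mul]

end Volume

section InnerProductSpace

variable {E : Type*} [NormedAddCommGroup E] [InnerProductSpace ℝ E] [FiniteDimensional ℝ E] {R : ℝ}

lemma det_fderiv_eq_zero_of_norm_eq_const (hR : R ≠ 0) {F : E → E} (hF : Differentiable ℝ F)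
    (hFR : ∀ x, ‖F x‖ = R) (x : E) : (fderiv ℝ F x).det = 0 := by
  have horth : ∀ w, inner ℝ (F x) (fderiv ℝ F x w) = 0 := fun w => by
    have hd := (hF x).hasFDerivAt.norm_sq
    simp only [hFR] at hd
    simpa using congrArg (· w) (hd.unique (hasFDerivAt_const (R ^ 2) x))
  by_contra hdet
  have hsurj : Function.Surjective (fderiv ℝ F x) :=
    ((Module.End.isUnit_iff _).1
      ((LinearMap.isUnit_iff_isUnit_det _).2 (isUnit_iff_ne_zero.2 hdet))).2
  obtain ⟨w, hw⟩ := hsurj (F x)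
  have := horth w
  rw [hw, real_inner_self_eq_norm_sq, hFR] at this
  exact pow_ne_zero 2 hR this

lemma exists_norm_eq_and_ne_of_contDiff (hR : 0 < R) {F : E → E} (hF : ContDiff ℝ 1 F)
    (hFR : ∀ x, ‖F x‖ = R) : ∃ x, ‖x‖ = R ∧ F x ≠ x := by
  borelize E
  by_contra! hFx
  have hFd : Differentiable ℝ F := hF.differentiable one_ne_zero
  have hfderiv : ∀ x, ContinuousLinearMap.id ℝ E + fderiv ℝ (fun x => F x - x) x = fderiv ℝ F x :=
    fun x => by
      rw [fderiv_fun_sub (hFd x) differentiableAt_fun_id, fderiv_fun_id, add_sub_cancel]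
  have hg : ContDiff ℝ 1 fun x => F x - x := hF.sub contDiff_id
  have hvol := integral_det_id_add_fderiv volume hR hg fun x hx => sub_eq_zero.2 (hFx x hx)
  simp only [hfderiv, det_fderiv_eq_zero_of_norm_eq_const hR.ne' hFd hFR, integral_zero] at hvol
  exact (ENNReal.toReal_pos (Metric.measure_ball_pos volume 0 hR).ne'
    measure_ball_lt_top.ne).ne hvol

lemma exists_add_eq_zero_of_eq_zero_off_ball (hR : 0 < R) {k : E → E} (hk : Continuous k)
    (hkR : ∀ x, R ≤ ‖x‖ → k x = 0) : ∃ x, x + k x = 0 := by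
  by_contra! hne
  obtain ⟨g, hg, hgk, hsupp⟩ := hk.exists_contDiff_approx 1 (ε := fun x => ‖x + k x‖)
    (by fun_prop) fun x => norm_pos_iff.2 (hne x)
  have hgR : ∀ x, R ≤ ‖x‖ → g x = 0 := fun x hx =>
    Function.notMem_support.1 fun h => hsupp h (hkR x hx)
  have hgne : ∀ x, x + g x ≠ 0 := fun x hx => by
    have := hgk x
    rw [eq_neg_of_add_eq_zero_right hx, dist_eq_norm, ← norm_neg, neg_sub, sub_neg_eq_add,
      add_comm] at this
    exact this.ne rfl
  have hdiff : ContDiff ℝ 1 fun x => x + g x := contDiff_id.add hg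
  obtain ⟨x, hx, hFx⟩ := exists_norm_eq_and_ne_of_contDiff hR
    (F := fun x => (R * ‖x + g x‖⁻¹) • (x + g x))
    ((contDiff_const.mul ((hdiff.norm ℝ hgne).inv fun x => norm_ne_zero_iff.2 (hgne x))).smul hdiff)
    fun x => by
      rw [norm_smul, norm_mul, norm_inv, norm_norm, Real.norm_of_nonneg hR.le,
        inv_mul_cancel_right₀ (norm_ne_zero_iff.2 (hgne x))]
  refine hFx ?_
  simp [hgR x hx.ge, hx, hR.ne']

lemma brouwer_exists_isFixedPt_of_inner {f : E → E} (hf : Continuous f) {M : ℝ}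
    (hM : ∀ x, ‖f x‖ ≤ M) : ∃ x, Function.IsFixedPt f x := by
  let θ : E → ℝ := fun x => max 0 (min 1 (M + 1 - ‖x‖))
  have hθ₀ : ∀ x, 0 ≤ θ x := fun x => le_max_left _ _
  have hθ₁ : ∀ x, θ x ≤ 1 := fun x => max_le zero_le_one (min_le_left _ _)
  have hM₀ : 0 ≤ M := (norm_nonneg _).trans (hM 0)
  obtain ⟨x, hx⟩ := exists_add_eq_zero_of_eq_zero_off_ball (R := M + 1) (by positivity)
    (k := fun x => -(θ x • f x)) (by fun_prop) fun x hx => by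
      simp [θ, (min_le_right 1 _).trans (sub_nonpos.2 hx)]
  have hx' : x = θ x • f x := by rwa [← sub_eq_add_neg, sub_eq_zero] at hx
  have hnorm : ‖x‖ ≤ M := calc
    ‖x‖ = θ x * ‖f x‖ := by
      conv_lhs => rw [hx', norm_smul, Real.norm_of_nonneg (hθ₀ x)]
    _ ≤ 1 * M := by gcongr; exacts [hθ₁ x, hM x]
    _ = M := one_mul M
  have hθ : θ x = 1 := by
    simp only [θ]
    rw [min_eq_left (by linarith), max_eq_right zero_le_one]
  rw [hθ, one_smul] at hx'
  exact ⟨x, hx'.symm⟩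

end InnerProductSpace

theorem brouwer_exists_isFixedPt_of_norm_le {E : Type*} [NormedAddCommGroup E] [NormedSpace ℝ E]
    [FiniteDimensional ℝ E] {f : E → E} (hf : Continuous f) {M : ℝ} (hM : ∀ x, ‖f x‖ ≤ M) :
    ∃ x, Function.IsFixedPt f x := by
  let e := toEuclidean (E := E)
  let L : E →L[ℝ] EuclideanSpace ℝ (Fin (Module.finrank ℝ E)) := e
  obtain ⟨x, hx⟩ := brouwer_exists_isFixedPt_of_inner (f := fun x => e (f (e.symm x)))
    (M := ‖L‖ * M) (by fun_prop) fun x => (L.le_opNorm _).trans (by gcongr; exact hM _)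
  exact ⟨e.symm x, e.injective (by simpa using hx.eq)⟩

theorem brouwer_exists_isFixedPt_of_retract {E K : Type*} [NormedAddCommGroup E] [NormedSpace ℝ E]
    [FiniteDimensional ℝ E] [TopologicalSpace K] [CompactSpace K] (i : C(K, E)) (r : C(E, K))
    (hri : Function.LeftInverse r i) (T : C(K, K)) : ∃ x, Function.IsFixedPt T x := by
  obtain ⟨M, hM⟩ := isCompact_univ.exists_bound_of_continuousOn i.continuous.continuousOn
  obtain ⟨y, hy⟩ := brouwer_exists_isFixedPt_of_norm_le ((i.comp (T.comp r)).continuous)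
    fun x => hM _ (mem_univ _)
  refine ⟨r y, ?_⟩
  exact (hri (T (r y))).symm.trans (congrArg r hy.eq)

end Brouwer

section Ekeland

lemma exists_two_mul_sub_le_of_bddBelow {α : Type*} {Φ : α → ℝ} {S : Set α}
    (hΦ : BddBelow (Φ '' S)) {x : α} (hx : x ∈ S) :
    ∃ y ∈ S, ∀ z ∈ S, 2 * Φ y - Φ x ≤ Φ z := by
  have hinf : ∀ z ∈ S, sInf (Φ '' S) ≤ Φ z := fun z hz => csInf_le hΦ (mem_image_of_mem Φ hz)
  rcases (hinf x hx).eq_or_lt with hmin | hlt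
  · exact ⟨x, hx, fun z hz => by linarith [hinf z hz]⟩
  · obtain ⟨_, ⟨y, hy, rfl⟩, hyx⟩ := exists_lt_of_csInf_lt ⟨Φ x, mem_image_of_mem Φ hx⟩
      (left_lt_add_div_two.2 hlt)
    exact ⟨y, hy, fun z hz => by linarith [hinf z hz]⟩

variable {α : Type*} [PseudoMetricSpace α] [CompleteSpace α] {Φ : α → ℝ} {κ : ℝ}

lemma exists_tendsto_of_add_mul_dist_succ_le (hΦ : LowerSemicontinuous Φ)
    (hbdd : BddBelow (range Φ)) (hκ : 0 < κ) {u : ℕ → α}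
    (hu : ∀ n, Φ (u (n + 1)) + κ * dist (u n) (u (n + 1)) ≤ Φ (u n)) :
    ∃ (x : α) (l : ℝ), Tendsto (Φ ∘ u) atTop (𝓝 l) ∧ ∀ n, Φ x + κ * dist (u n) x ≤ Φ (u n) := by
  have hmono : ∀ n m, n ≤ m → Φ (u m) + κ * dist (u n) (u m) ≤ Φ (u n) := fun n m hnm => by
    induction m, hnm using Nat.le_induction with
    | base => simp
    | succ m _ ih =>
      linarith [hu m, mul_le_mul_of_nonneg_left (dist_triangle (u n) (u m) (u (m + 1))) hκ.le]
  have hanti : Antitone (Φ ∘ u) := fun n m hnm => by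
    have := mul_nonneg hκ.le (dist_nonneg (x := u n) (y := u m))
    simp only [Function.comp_apply]
    linarith [hmono n m hnm]
  have hbdd' : BddBelow (range (Φ ∘ u)) := hbdd.mono (range_comp_subset_range u Φ)
  have hlim := tendsto_atTop_ciInf hanti hbdd'
  have hcauchy : CauchySeq u := by
    refine cauchySeq_of_le_tendsto_0' (fun n => (Φ (u n) - ⨅ k, (Φ ∘ u) k) / κ)
      (fun n m hnm => ?_) (by simpa using (hlim.sub_const (⨅ k, (Φ ∘ u) k)).div_const κ)
    rw [le_div_iff₀' hκ]
    linarith [hmono n m hnm, ciInf_le hbdd' m, Function.comp_apply (f := Φ) (g := u) (x := m)]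
  obtain ⟨x, hx⟩ := cauchySeq_tendsto_of_complete hcauchy
  refine ⟨x, _, hlim, fun n => ?_⟩
  have hclosed : IsClosed {y | Φ y + κ * dist (u n) y ≤ Φ (u n)} :=
    (hΦ.add (by fun_prop : Continuous fun y => κ * dist (u n) y).lowerSemicontinuous)
      |>.isClosed_preimage (Φ (u n))
  exact hclosed.mem_of_tendsto hx (eventually_atTop.2 ⟨n, hmono n⟩)

theorem ekeland_variational_principle (hΦ : LowerSemicontinuous Φ) (hbdd : BddBelow (range Φ))
    (hκ : 0 < κ) (x₀ : α) :
    ∃ x, Φ x + κ * dist x₀ x ≤ Φ x₀ ∧ ∀ y, Φ x - κ * dist x y ≤ Φ y := by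
  let S : α → Set α := fun x => {y | Φ y + κ * dist x y ≤ Φ x}
  have hself : ∀ x, x ∈ S x := fun x => by simp [S]
  choose next hnext hhalf using fun x =>
    exists_two_mul_sub_le_of_bddBelow (hbdd.mono (image_subset_range Φ (S x))) (hself x)
  let u : ℕ → α := fun n => next^[n] x₀
  have hu : ∀ n, u (n + 1) = next (u n) := fun n => Function.iterate_succ_apply' next n x₀
  obtain ⟨x, l, hlim, hx⟩ := exists_tendsto_of_add_mul_dist_succ_le hΦ hbdd hκ (u := u)
    fun n => hu n ▸ hnext (u n)
  refine ⟨x, hx 0, fun y => ?_⟩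
  by_contra! hy
  have hyS : ∀ n, y ∈ S (u n) := fun n => by
    have := mul_le_mul_of_nonneg_left (dist_triangle (u n) x y) hκ.le
    change Φ y + κ * dist (u n) y ≤ Φ (u n)
    linarith [hx n]
  have hly : 2 * l - l ≤ Φ y :=
    le_of_tendsto' (((hlim.comp (tendsto_add_atTop_nat 1)).const_mul 2).sub hlim) fun n => by
      simpa only [Function.comp_apply, hu] using hhalf (u n) y (hyS n)
  have hxl : Φ x ≤ l := ge_of_tendsto' hlim fun n => by
    have := mul_nonneg hκ.le (dist_nonneg (x := u n) (y := x))
    simp only [Function.comp_apply]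
    linarith [hx n]
  linarith [mul_nonneg hκ.le (dist_nonneg (x := x) (y := y))]

end Ekeland

section Descent

variable {H : Type*} [NormedAddCommGroup H] [NormedSpace ℝ H]
  {K : Type*} [TopologicalSpace K]

lemma exists_norm_le_one_lt_apply {L : H →L[ℝ] ℝ} {μ : ℝ} (hμ : μ < ‖L‖) :
    ∃ v, ‖v‖ ≤ 1 ∧ μ < L v := by
  obtain ⟨v, hv, hLv⟩ := L.exists_lt_apply_of_lt_opNorm hμ
  rcases lt_abs.1 hLv with h | h
  · exact ⟨v, hv.le, h⟩
  · exact ⟨-v, (norm_neg v).trans_le hv.le, by rwa [map_neg]⟩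

lemma exists_eq_sub_smul_of_mem_segment {u v y : H} {s : ℝ} (hs : 0 ≤ s)
    (hy : y ∈ segment ℝ u (u - s • v)) : ∃ σ ∈ Icc 0 s, y = u - σ • v := by
  rw [segment_eq_image'] at hy
  obtain ⟨σ, hσ, rfl⟩ := hy
  refine ⟨σ * s, ⟨mul_nonneg hσ.1 hs, mul_le_of_le_one_left hs hσ.2⟩, ?_⟩
  simp [mul_smul, sub_eq_add_neg]

lemma exists_continuous_descent_direction [NormalSpace K] [ParacompactSpace K]
    {L : K → H →L[ℝ] ℝ} (hL : Continuous L) {A U : Set K} (hA : IsClosed A) (hU : IsOpen U)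
    (hAU : A ⊆ U) {μ : ℝ} (hμ : 0 ≤ μ) (hμL : ∀ x ∈ A, μ < ‖L x‖) :
    ∃ v : C(K, H), (∀ x, ‖v x‖ ≤ 1) ∧ (∀ x ∈ A, μ < L x (v x)) ∧ (∀ x ∉ U, v x = 0) ∧
      ∀ x, μ * ‖v x‖ ≤ L x (v x) := by
  let t : K → Set H := fun x =>
    {w | ‖w‖ ≤ 1} ∩ ({w | x ∈ A → μ < L x w} ∩ ({w | x ∉ U → w = 0} ∩ {w | μ * ‖w‖ ≤ L x w}))
  have hconvex : ∀ x, Convex ℝ (t x) := fun x => by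
    have hball : Convex ℝ {w : H | ‖w‖ ≤ 1} := by
      simpa using convexOn_univ_norm.convex_le (E := H) (1 : ℝ)
    have hA : Convex ℝ {w | x ∈ A → μ < L x w} := by
      by_cases hx : x ∈ A
      · simpa [hx] using convex_halfSpace_gt (L x).toLinearMap.isLinear μ
      · simp [hx, convex_univ]
    have hU : Convex ℝ {w : H | x ∉ U → w = 0} := by
      by_cases hx : x ∈ U <;> simp [hx, convex_univ]
    have hcone : Convex ℝ {w | μ * ‖w‖ ≤ L x w} := by
      simpa using ((convexOn_univ_norm.smul hμ).sub
        ((L x).toLinearMap.concaveOn convex_univ)).convex_le (0 : ℝ)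
    exact hball.inter (hA.inter (hU.inter hcone))
  have hlocal : ∀ x, ∃ w, ∀ᶠ y in 𝓝 x, w ∈ t y := fun x => by
    by_cases hx : x ∈ A
    · obtain ⟨w, hw, hLw⟩ := exists_norm_le_one_lt_apply (hμL x hx)
      have hnear : ∀ᶠ y in 𝓝 x, μ < L y w :=
        (hL.clm_apply continuous_const).continuousAt.eventually_const_lt hLw
      refine ⟨w, ?_⟩
      filter_upwards [hnear, hU.mem_nhds (hAU hx)] with y hy hyU
      exact ⟨hw, fun _ => hy, fun h => absurd hyU h, (mul_le_of_le_one_right hμ hw).trans hy.le⟩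
    · refine ⟨0, ?_⟩
      filter_upwards [hA.isOpen_compl.mem_nhds hx] with y hy
      exact ⟨by simp, fun h => absurd h hy, fun _ => rfl, by simp⟩
  obtain ⟨v, hv⟩ := exists_continuous_forall_mem_convex_of_local_const hconvex hlocal
  exact ⟨v, fun x => (hv x).1, fun x => (hv x).2.1, fun x => (hv x).2.2.1,
    fun x => (hv x).2.2.2⟩

variable [CompactSpace K]

lemma exists_forall_abs_sub_linearization_le {ψ : H → ℝ} (hψ : ContDiff ℝ 1 ψ) (F v : C(K, H))
    {κ : ℝ} (hκ : 0 < κ) :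
    ∃ s₀ > 0, ∀ s ∈ Icc 0 s₀, ∀ x,
      |ψ (F x - s • v x) - (ψ (F x) - s * fderiv ℝ ψ (F x) (v x))| ≤ κ * (s * ‖v x‖) := by
  have hlocal : ∀ᶠ s in 𝓝 (0 : ℝ), ∀ x ∈ univ,
      |ψ (F x - s • v x) - (ψ (F x) - s * fderiv ℝ ψ (F x) (v x))| ≤ κ * ‖s • v x‖ := by
    refine isCompact_univ.eventually_forall_of_forall_eventually fun x₀ _ => ?_
    have hstrict := (hψ.contDiffAt.hasStrictFDerivAt one_ne_zero (x := F x₀)).isLittleO.def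
      (half_pos hκ)
    have hpair : Tendsto (fun z : ℝ × K => (F z.2 - z.1 • v z.2, F z.2)) (𝓝 (0, x₀))
        (𝓝 (F x₀, F x₀)) := by
      refine Continuous.tendsto' (by fun_prop) _ _ (by simp)
    have hfderiv : ∀ᶠ z : ℝ × K in 𝓝 (0, x₀),
        dist (fderiv ℝ ψ (F z.2)) (fderiv ℝ ψ (F x₀)) < κ / 2 :=
      Metric.tendsto_nhds.1 (((hψ.continuous_fderiv one_ne_zero).comp
        (F.continuous.comp continuous_snd)).tendsto (0, x₀)) _ (half_pos hκ)
    filter_upwards [hpair.eventually hstrict, hfderiv] with ⟨s, x⟩ hstrict hfderiv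
    set w := s • v x
    have hop : |(fderiv ℝ ψ (F x) - fderiv ℝ ψ (F x₀)) w| ≤ κ / 2 * ‖w‖ :=
      ((fderiv ℝ ψ (F x) - fderiv ℝ ψ (F x₀)).le_opNorm w).trans
        (by gcongr; exact (dist_eq_norm (fderiv ℝ ψ (F x)) _ ▸ hfderiv).le)
    rw [sub_sub_cancel_left, norm_neg, map_neg, sub_neg_eq_add, Real.norm_eq_abs] at hstrict
    calc |ψ (F x - w) - (ψ (F x) - s * fderiv ℝ ψ (F x) (v x))|
        = |(ψ (F x - w) - ψ (F x) + fderiv ℝ ψ (F x₀) w)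
            + (fderiv ℝ ψ (F x) - fderiv ℝ ψ (F x₀)) w| := by
          congr 1
          simp only [w, map_smul, smul_eq_mul, sub_apply]
          ring
      _ ≤ κ / 2 * ‖w‖ + κ / 2 * ‖w‖ := (abs_add_le _ _).trans (add_le_add hstrict hop)
      _ = κ * ‖w‖ := by ring
  obtain ⟨s₀, hs₀, h⟩ := Metric.nhds_basis_closedBall.eventually_iff.1 hlocal
  refine ⟨s₀, hs₀, fun s hs x => ?_⟩
  have := h (mem_closedBall_zero_iff.2 ((Real.norm_of_nonneg hs.1).trans_le hs.2)) x (mem_univ x)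
  rwa [norm_smul, Real.norm_of_nonneg hs.1] at this

lemma eventually_forall_sub_mul_lt {f D : K → ℝ} (hf : Continuous f) (hD : Continuous D) {M κ : ℝ}
    (hfM : ∀ x, f x ≤ M) (hκ : ∀ x, f x = M → κ < D x) :
    ∀ᶠ s in 𝓝[>] (0 : ℝ), ∀ x, f x - s * D x < M - s * κ := by
  have hlocal : ∀ᶠ s in 𝓝 (0 : ℝ), ∀ x ∈ univ, 0 < s → f x - s * D x < M - s * κ := by
    refine isCompact_univ.eventually_forall_of_forall_eventually fun x₀ _ => ?_
    rcases (hfM x₀).eq_or_lt with hx₀ | hx₀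
    · have hnear : ∀ᶠ z : ℝ × K in 𝓝 (0, x₀), κ < D z.2 :=
        (hD.comp continuous_snd).continuousAt.eventually_const_lt (hκ x₀ hx₀)
      filter_upwards [hnear] with z hz hs
      linarith [hfM z.2, mul_lt_mul_of_pos_left hz hs]
    · have hnear : ∀ᶠ z : ℝ × K in 𝓝 (0, x₀), f z.2 - z.1 * D z.2 < M - z.1 * κ :=
        ContinuousAt.eventually_lt (by fun_prop) (by fun_prop) (by simpa using hx₀)
      exact hnear.mono fun z hz _ => hz
  exact eventually_nhdsWithin_iff.2 (hlocal.mono fun s hs hs₀ x => hs x (mem_univ x) hs₀)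

end Descent

section PalaisSmale

variable {H : Type*} [NormedAddCommGroup H] [NormedSpace ℝ H] {ψ : H → ℝ}

/-- The Palais–Smale condition for a functional on a normed space: a sequence along which the values
converge and the derivatives tend to zero has a convergent subsequence. -/
def PalaisSmale (ψ : H → ℝ) : Prop :=
  ∀ (a : ℝ) (u : ℕ → H), Tendsto (fun n => ψ (u n)) atTop (𝓝 a) →
    Tendsto (fun n => ‖fderiv ℝ ψ (u n)‖) atTop (𝓝 0) →
    ∃ φ : ℕ → ℕ, StrictMono φ ∧ ∃ x, Tendsto (fun n => u (φ n)) atTop (𝓝 x)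

lemma PalaisSmale.exists_mem_fderiv_eq_zero (hPS : PalaisSmale ψ) (hψ : ContDiff ℝ 1 ψ) {S : Set H}
    (hS : IsClosed S) {c : ℝ} (hc : ∀ ε > 0, ∃ u, ∃ v ∈ S, dist u v ≤ ε ∧ |ψ u - c| ≤ ε ∧
      ‖fderiv ℝ ψ u‖ ≤ ε) :
    ∃ u ∈ S, ψ u = c ∧ fderiv ℝ ψ u = 0 := by
  choose u v hvS huv hval hder using fun n : ℕ => hc _ (Nat.one_div_pos_of_nat (n := n) (α := ℝ))
  have hε : Tendsto (fun n : ℕ => 1 / ((n : ℝ) + 1)) atTop (𝓝 0) :=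
    tendsto_one_div_add_atTop_nhds_zero_nat
  have hlim : Tendsto (fun n => ψ (u n)) atTop (𝓝 c) :=
    tendsto_iff_dist_tendsto_zero.2 (squeeze_zero (fun _ => dist_nonneg) hval hε)
  have hder' : Tendsto (fun n => ‖fderiv ℝ ψ (u n)‖) atTop (𝓝 0) :=
    squeeze_zero (fun _ => norm_nonneg _) hder hε
  obtain ⟨φ, hφ, x, hx⟩ := hPS c u hlim hder'
  refine ⟨x, ?_, ?_, ?_⟩
  · have hdist : Tendsto (fun n => dist (u (φ n)) (v (φ n))) atTop (𝓝 0) :=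
      (squeeze_zero (fun _ => dist_nonneg) huv hε).comp hφ.tendsto_atTop
    exact hS.mem_of_tendsto ((tendsto_iff_of_dist hdist).1 hx) (Eventually.of_forall fun n => hvS _)
  · exact tendsto_nhds_unique ((hψ.continuous.tendsto x).comp hx) (hlim.comp hφ.tendsto_atTop)
  · exact norm_eq_zero.1 <| tendsto_nhds_unique
      (((hψ.continuous_fderiv one_ne_zero).norm.tendsto x).comp hx) (hder'.comp hφ.tendsto_atTop)

end PalaisSmale

section Minimax

variable {H : Type*} [NormedAddCommGroup H] [NormedSpace ℝ H]
  {K : Type*} [TopologicalSpace K] [CompactSpace K] {ψ χ : H → ℝ} {a I g κ : ℝ}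

/-- A class of maps into the domain of `ψ` is descent stable if it is closed under moving the points
where `χ` exceeds `a` along segments on which `ψ` stays below its initial value. Here `χ` is a
perturbation of `ψ`, the functional whose maximum along the maps of the class is minimised. -/
def DescentStable (ψ χ : H → ℝ) (a : ℝ) (X : Set C(K, H)) : Prop :=
  ∀ F ∈ X, ∀ F' : C(K, H), (∀ x, χ (F x) ≤ a → F' x = F x) →
    (∀ x, ∀ y ∈ segment ℝ (F x) (F' x), ψ y ≤ ψ (F x)) → F' ∈ X

lemma exists_descent_add_mul_dist_lt [T2Space K] (hψ : ContDiff ℝ 1 ψ) {ε : ℝ≥0}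
    (hχ : LipschitzWith ε fun u => χ u - ψ u) (hκ : 0 < κ) {M : ℝ} (haM : a < M) {F : C(K, H)}
    (hFM : ∀ x, χ (F x) ≤ M) (hF : ∀ x, χ (F x) = M → ε + 2 * κ < ‖fderiv ℝ ψ (F x)‖) :
    ∃ F' : C(K, H), (∀ x, χ (F x) ≤ a → F' x = F x) ∧
      (∀ x, ∀ y ∈ segment ℝ (F x) (F' x), ψ y ≤ ψ (F x)) ∧
      ∀ x, χ (F' x) + κ * dist F F' < M := by
  have hχc : Continuous χ :=
    (hχ.continuous.add hψ.continuous).congr fun u => sub_add_cancel (χ u) (ψ u)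
  have hχF : Continuous fun x => χ (F x) := hχc.comp F.continuous
  have hL : Continuous fun x => fderiv ℝ ψ (F x) :=
    (hψ.continuous_fderiv one_ne_zero).comp F.continuous
  obtain ⟨v, hv, hvM, hva, hvL⟩ := exists_continuous_descent_direction hL
    (isClosed_eq hχF continuous_const) (isOpen_lt continuous_const hχF)
    (fun x hx => haM.trans_eq (Eq.symm hx)) (by positivity : 0 ≤ ε + 2 * κ) hF
  obtain ⟨s₀, hs₀, hlin⟩ := exists_forall_abs_sub_linearization_le hψ F v (half_pos hκ)
  have hstep := eventually_forall_sub_mul_lt hχF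
    (D := fun x => fderiv ℝ ψ (F x) (v x) - (ε + κ / 2) * ‖v x‖)
    ((hL.clm_apply v.continuous).sub (by fun_prop)) hFM (κ := κ) fun x hx => by
      have := mul_le_of_le_one_right (by positivity : 0 ≤ ε + κ / 2) (hv x)
      linarith [hvM x hx]
  obtain ⟨s, hstep, hs, hss₀⟩ := (hstep.and (Ioc_mem_nhdsGT hs₀)).exists
  have hdecrease : ∀ σ ∈ Icc 0 s₀, ∀ x,
      ψ (F x - σ • v x) ≤ ψ (F x) - σ * (fderiv ℝ ψ (F x) (v x) - κ / 2 * ‖v x‖) :=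
    fun σ hσ x => by linarith [(abs_le.1 (hlin σ hσ x)).2]
  refine ⟨F - s • v, fun x hx => by simp [hva x (not_lt.2 hx)], fun x y hy => ?_, fun x => ?_⟩
  · obtain ⟨σ, hσ, rfl⟩ := exists_eq_sub_smul_of_mem_segment hs.le hy
    have hvx : 0 ≤ fderiv ℝ ψ (F x) (v x) - κ / 2 * ‖v x‖ := by
      have : 0 ≤ (ε + 3 / 2 * κ) * ‖v x‖ := by positivity
      linarith [hvL x]
    linarith [hdecrease σ ⟨hσ.1, hσ.2.trans hss₀⟩ x, mul_nonneg hσ.1 hvx]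
  · have hdist : dist F (F - s • v) ≤ s := by
      refine (ContinuousMap.dist_le hs.le).2 fun x => ?_
      simpa [dist_eq_norm, norm_smul, abs_of_pos hs] using mul_le_of_le_one_right hs.le (hv x)
    have hperturb : χ (F x - s • v x) - ψ (F x - s • v x) - (χ (F x) - ψ (F x))
        ≤ ε * (s * ‖v x‖) := by
      refine (le_abs_self _).trans ((hχ.dist_le_mul _ _).trans_eq ?_)
      rw [dist_eq_norm, sub_sub_cancel_left, norm_neg, norm_smul, Real.norm_of_nonneg hs.le]
    change χ (F x - s • v x) + κ * dist F (F - s • v) < M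
    linarith [hdecrease s ⟨hs.le, hss₀⟩ x, hstep x, mul_le_mul_of_nonneg_left hdist hκ.le]

variable [CompleteSpace H]

lemma exists_almost_critical_of_minimax [T2Space K] (hψ : ContDiff ℝ 1 ψ) {ε : ℝ≥0}
    (hχ : LipschitzWith ε fun u => χ u - ψ u) (hκ : 0 < κ) (haI : a < I) {X : Set C(K, H)}
    (hX : IsClosed X) (hstab : DescentStable ψ χ a X) (hlow : ∀ F ∈ X, ∃ x, I ≤ χ (F x))
    {F₀ : C(K, H)} (hF₀ : F₀ ∈ X) (hF₀g : ∀ x, χ (F₀ x) ≤ I + g) :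
    ∃ F ∈ X, ∃ x, dist F₀ F ≤ g / κ ∧ I ≤ χ (F x) ∧ χ (F x) ≤ I + g ∧
      ‖fderiv ℝ ψ (F x)‖ ≤ ε + 2 * κ := by
  have : Nonempty K := (hlow F₀ hF₀).nonempty
  have : CompleteSpace X := hX.completeSpace_coe
  have hχc : Continuous χ :=
    (hχ.continuous.add hψ.continuous).congr fun u => sub_add_cancel (χ u) (ψ u)
  let Φ : X → ℝ := fun F => ⨆ x, χ (F.1 x)
  have hbdd : ∀ F : X, BddAbove (range fun x => χ (F.1 x)) := fun F =>
    (isCompact_range (hχc.comp F.1.continuous)).bddAbove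
  have hleΦ : ∀ (F : X) x, χ (F.1 x) ≤ Φ F := fun F x => le_ciSup (hbdd F) x
  have hIΦ : ∀ F, I ≤ Φ F := fun F => by
    obtain ⟨x, hx⟩ := hlow F F.2
    exact hx.trans (hleΦ F x)
  have hΦ : LowerSemicontinuous Φ := lowerSemicontinuous_ciSup hbdd fun x =>
    (hχc.comp ((continuous_eval_const x).comp continuous_subtype_val)).lowerSemicontinuous
  obtain ⟨F, hFF₀, hFmin⟩ := ekeland_variational_principle hΦ ⟨I, forall_mem_range.2 hIΦ⟩ hκ
    ⟨F₀, hF₀⟩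
  have hΦF₀ : Φ ⟨F₀, hF₀⟩ ≤ I + g := ciSup_le hF₀g
  have hFg : κ * dist F₀ F ≤ g := by
    have : κ * dist F₀ F = κ * dist (⟨F₀, hF₀⟩ : X) F := rfl
    linarith [hIΦ F]
  obtain ⟨x, hxF, hx⟩ : ∃ x, χ (F.1 x) = Φ F ∧ ‖fderiv ℝ ψ (F.1 x)‖ ≤ ε + 2 * κ := by
    by_contra! hF
    obtain ⟨F', hF'a, hF'ψ, hF'⟩ := exists_descent_add_mul_dist_lt hψ hχ hκ
      (haI.trans_le (hIΦ F)) (hleΦ F) hF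
    have hF'X : F' ∈ X := hstab F F.2 F' hF'a hF'ψ
    obtain ⟨x, hx⟩ : ∃ x, ∀ y, χ (F' y) ≤ χ (F' x) :=
      (hχc.comp F'.continuous).exists_forall_ge (by simp)
    have hΦF' : Φ ⟨F', hF'X⟩ ≤ χ (F' x) := ciSup_le hx
    have hΦF : Φ F - κ * dist F.1 F' ≤ Φ ⟨F', hF'X⟩ := hFmin ⟨F', hF'X⟩
    linarith [hF' x]
  refine ⟨F, F.2, x, (le_div_iff₀' hκ).2 hFg, hxF ▸ hIΦ F, ?_, hx⟩
  rw [hxF]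
  have : 0 ≤ κ * dist (⟨F₀, hF₀⟩ : X) F := by positivity
  linarith

lemma exists_almost_critical_of_forall_le (hψ : ContDiff ℝ 1 ψ) (hκ : 0 < κ) {m : ℝ}
    (hm : ∀ u, m ≤ ψ u) {u : H} (hu : ψ u ≤ m + g) :
    ∃ w, dist u w ≤ g / κ ∧ ψ w ≤ m + g ∧ ‖fderiv ℝ ψ w‖ ≤ 2 * κ := by
  obtain ⟨F, -, x, hdist, -, hF, hder⟩ := exists_almost_critical_of_minimax (K := Unit) (ε := 0)
    (F₀ := .const Unit u) hψ (by simp) hκ (sub_one_lt m)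
    isClosed_univ (fun _ _ _ _ _ => mem_univ _) (fun F _ => ⟨(), hm _⟩) (mem_univ _) fun _ => hu
  exact ⟨F x, (ContinuousMap.dist_apply_le_dist x).trans hdist, hF, by simpa using hder⟩

lemma PalaisSmale.exists_forall_le (hPS : PalaisSmale ψ) (hψ : ContDiff ℝ 1 ψ)
    (hbdd : BddBelow (range ψ)) : ∃ u, ∀ v, ψ u ≤ ψ v := by
  have hm : ∀ u, ⨅ v, ψ v ≤ ψ u := ciInf_le hbdd
  obtain ⟨u, -, hu, -⟩ := hPS.exists_mem_fderiv_eq_zero hψ isClosed_univ (c := ⨅ v, ψ v)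
    fun ε hε => by
      obtain ⟨u, hu⟩ := exists_lt_of_ciInf_lt (lt_add_of_pos_right (⨅ v, ψ v) hε)
      obtain ⟨w, -, hw, hder⟩ := exists_almost_critical_of_forall_le hψ (half_pos hε) hm hu.le
      exact ⟨w, w, mem_univ w, by simpa using hε.le,
        abs_le.2 ⟨by linarith [hm w], by linarith⟩, hder.trans_eq (by ring)⟩
  exact ⟨u, fun v => hu ▸ hm v⟩

lemma PalaisSmale.exists_forall_dist_lt (hPS : PalaisSmale ψ) (hψ : ContDiff ℝ 1 ψ) {u₀ : H}
    (hmin : ∀ u, ψ u₀ ≤ ψ u) (hunique : ∀ u, ψ u = ψ u₀ → u = u₀) {r : ℝ} (hr : 0 < r) :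
    ∃ η > 0, ∀ u, ψ u < ψ u₀ + η → dist u u₀ < r := by
  by_contra! hfar
  obtain ⟨u, hur, hu, -⟩ := hPS.exists_mem_fderiv_eq_zero hψ (S := {u | r ≤ dist u u₀})
    (c := ψ u₀) (isClosed_le continuous_const (by fun_prop)) fun ε hε => by
      obtain ⟨v, hv, hvr⟩ := hfar (min ε (ε ^ 2 / 2)) (by positivity)
      obtain ⟨w, hdist, hw, hder⟩ :=
        exists_almost_critical_of_forall_le hψ (half_pos hε) hmin hv.le
      refine ⟨w, v, hvr, ?_, abs_le.2 ⟨by linarith [hmin w], ?_⟩, hder.trans_eq (by ring)⟩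
      · calc dist w v = dist v w := dist_comm w v
          _ ≤ min ε (ε ^ 2 / 2) / (ε / 2) := hdist
          _ ≤ ε ^ 2 / 2 / (ε / 2) := by gcongr; exact min_le_right _ _
          _ = ε := by field_simp
      · linarith [min_le_left ε (ε ^ 2 / 2)]
  have : r ≤ dist u u₀ := hur
  rw [hunique u hu, dist_self] at this
  exact this.not_gt hr

lemma PalaisSmale.exists_critical_of_minimax [T2Space K] (hPS : PalaisSmale ψ)
    (hψ : ContDiff ℝ 1 ψ) (haI : a < I) {X : Set C(K, H)} (hX : IsClosed X) (hne : X.Nonempty)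
    (hstab : DescentStable ψ ψ a X) (hlow : ∀ F ∈ X, ∃ x, I ≤ ψ (F x)) :
    ∃ u, fderiv ℝ ψ u = 0 ∧ I ≤ ψ u ∧ ∀ F ∈ X, ∃ x, ψ u ≤ ψ (F x) := by
  have : Nonempty X := hne.to_subtype
  have : Nonempty K := (hlow _ hne.some_mem).nonempty
  have hmax : ∀ F : C(K, H), ∃ x, ∀ y, ψ (F y) ≤ ψ (F x) := fun F =>
    (hψ.continuous.comp F.continuous).exists_forall_ge (by simp)
  choose top htop using hmax
  have hI : ∀ F : X, I ≤ ψ (F.1 (top F)) := fun F => by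
    obtain ⟨x, hx⟩ := hlow F F.2
    exact hx.trans (htop F x)
  let c := ⨅ F : X, ψ (F.1 (top F))
  have hc : ∀ F ∈ X, c ≤ ψ (F (top F)) := fun F hF =>
    ciInf_le ⟨I, forall_mem_range.2 hI⟩ (⟨F, hF⟩ : X)
  have hIc : I ≤ c := le_ciInf hI
  obtain ⟨u, -, hu, hcrit⟩ := hPS.exists_mem_fderiv_eq_zero hψ isClosed_univ (c := c)
    fun ε hε => by
      obtain ⟨F₀, hF₀⟩ := exists_lt_of_ciInf_lt (lt_add_of_pos_right c hε)
      obtain ⟨F, -, x, -, hcF, hFc, hder⟩ := exists_almost_critical_of_minimax (ε := 0) hψ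
        (by simp) (half_pos hε) (haI.trans_le hIc) hX hstab
        (fun F hF => ⟨top F, hc F hF⟩) F₀.2 fun x => (htop F₀ x).trans hF₀.le
      exact ⟨F x, F x, mem_univ _, by simpa using hε.le,
        abs_le.2 ⟨by linarith, by linarith⟩, hder.trans_eq (by simp; ring)⟩
  exact ⟨u, hcrit, hu ▸ hIc, fun F hF => ⟨top F, hu ▸ hc F hF⟩⟩

end Minimax

section Contraction

variable {H : Type*} [NormedAddCommGroup H] [NormedSpace ℝ H]
  {K : Type*} [TopologicalSpace K] {ψ : H → ℝ} {ι : C(K, H)}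

lemma homotopicWith_of_segment {Q : K → H → Prop} {f g : C(K, H)}
    (hQ : ∀ x, ∀ y ∈ segment ℝ (f x) (g x), Q x y) :
    ContinuousMap.HomotopicWith f g fun γ => ∀ x, Q x (γ x) :=
  ⟨{ ContinuousMap.Homotopy.affine f g with
    prop' := fun t x => hQ x _ (segment_eq_image_lineMap ℝ (f x) (g x) ▸ mem_image_of_mem _ t.2) }⟩

variable [CompactSpace K]

lemma eventually_segment_subset {U : Set H} (hU : IsOpen U) {γ : C(K, H)} (hγ : ∀ x, γ x ∈ U) :
    ∀ᶠ γ' in 𝓝 γ, ∀ x, segment ℝ (γ x) (γ' x) ⊆ U := by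
  obtain ⟨d, hd, hdU⟩ := (isCompact_range γ.continuous).exists_thickening_subset_open hU
    (range_subset_iff.2 hγ)
  filter_upwards [Metric.ball_mem_nhds γ hd] with γ' hγ' x
  have hγ'x : γ' x ∈ Metric.ball (γ x) d := (ContinuousMap.dist_apply_le_dist x).trans_lt hγ'
  exact ((convex_ball (γ x) d).segment_subset (Metric.mem_ball_self hd) hγ'x).trans
    ((Metric.ball_subset_thickening (mem_range_self x) d).trans hdU)

lemma isClosed_homotopicWith_inter {Q : K → H → Prop} {U : Set H} (hU : IsOpen U)
    (hUQ : ∀ x, ∀ y ∈ U, Q x y) {Z : Set C(K, H)} (hZ : IsClosed Z)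
    (hZU : ∀ γ ∈ Z, ∀ x, γ x ∈ U) :
    IsClosed ({γ | ContinuousMap.HomotopicWith ι γ fun η => ∀ x, Q x (η x)} ∩ Z) := by
  refine isClosed_of_closure_subset fun γ hγ => ?_
  have hγZ : γ ∈ Z := closure_minimal inter_subset_right hZ hγ
  obtain ⟨γ', ⟨hγ', -⟩, hseg⟩ :=
    ((mem_closure_iff_frequently.1 hγ).and_eventually
      (eventually_segment_subset hU (hZU γ hγZ))).exists
  exact ⟨hγ'.trans (homotopicWith_of_segment fun x y hy => hUQ x y (hseg x hy)).symm, hγZ⟩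

lemma exists_homotopicWith_lt_zero_of_fderiv_ne_zero [T2Space K] (hψ : ContDiff ℝ 1 ψ)
    (hι : ∀ x, ψ (ι x) ≤ 0) (hcrit : ∀ x, fderiv ℝ ψ (ι x) ≠ 0) :
    ∃ γ : C(K, H), (∀ x, ψ (γ x) < 0) ∧
      ContinuousMap.HomotopicWith ι γ fun η => ∀ x, ψ (η x) < 0 ∨ η x = ι x := by
  have hL : Continuous fun x => fderiv ℝ ψ (ι x) :=
    (hψ.continuous_fderiv one_ne_zero).comp ι.continuous
  obtain ⟨v, hv, hLv, -⟩ := exists_continuous_descent_direction hL isClosed_univ isOpen_univ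
    (subset_univ _) le_rfl fun x _ => norm_pos_iff.2 (hcrit x)
  obtain ⟨κ, hκ, hκL⟩ := isCompact_univ.exists_forall_le' (hL.clm_apply v.continuous).continuousOn
    hLv
  obtain ⟨s₀, hs₀, hlin⟩ := exists_forall_abs_sub_linearization_le hψ ι v (half_pos hκ)
  have hdecrease : ∀ s ∈ Ioc 0 s₀, ∀ x, ψ (ι x - s • v x) < 0 := fun s hs x => by
    have hvx : κ / 2 * (s * ‖v x‖) ≤ κ / 2 * s := by
      have := mul_le_of_le_one_right hs.1.le (hv x)
      gcongr
    linarith [(abs_le.1 (hlin s (Ioc_subset_Icc_self hs) x)).2, hι x, mul_pos hκ hs.1,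
      mul_le_mul_of_nonneg_left (hκL x (mem_univ x)) hs.1.le]
  refine ⟨ι - s₀ • v, hdecrease s₀ ⟨hs₀, le_rfl⟩,
    homotopicWith_of_segment (Q := fun x u => ψ u < 0 ∨ u = ι x) fun x y hy => ?_⟩
  obtain ⟨σ, ⟨hσ₀, hσs₀⟩, rfl⟩ := exists_eq_sub_smul_of_mem_segment hs₀.le hy
  rcases hσ₀.eq_or_lt with rfl | hσ₀
  · simp
  · exact Or.inl (hdecrease σ ⟨hσ₀, hσs₀⟩ x)

lemma PalaisSmale.homotopicWith_const_of_forall_le [CompleteSpace H] [T2Space K]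
    (hPS : PalaisSmale ψ) (hψ : ContDiff ℝ 1 ψ) {u₀ : H} (hmin : ∀ u, ψ u₀ ≤ ψ u)
    (hneg : ψ u₀ < 0) (hunique : ∀ u, fderiv ℝ ψ u = 0 → ψ u < 0 → u = u₀)
    (hι : ∀ x, ψ (ι x) ≤ 0) (hcrit : ∀ x, fderiv ℝ ψ (ι x) ≠ 0) :
    ContinuousMap.HomotopicWith ι (.const K u₀) fun η => ∀ x, ψ (η x) < 0 ∨ η x = ι x := by
  have hnegOpen : IsOpen {u | ψ u < 0} := isOpen_lt hψ.continuous continuous_const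
  obtain ⟨r, hr, hball⟩ := Metric.isOpen_iff.1 hnegOpen u₀ hneg
  obtain ⟨η, hη, hηr⟩ := hPS.exists_forall_dist_lt hψ hmin (r := r) (fun u hu =>
    hunique u (IsLocalMin.fderiv_eq_zero (Eventually.of_forall fun v => hu ▸ hmin v))
      (hu ▸ hneg)) hr
  obtain ⟨γ₀, hγ₀neg, hγ₀⟩ := exists_homotopicWith_lt_zero_of_fderiv_ne_zero hψ hι hcrit
  let Z : Set C(K, H) := {γ | ∀ x, ψ (γ x) ≤ ψ (γ₀ x)}
  have hZneg : ∀ γ ∈ Z, ∀ x, ψ (γ x) < 0 := fun γ hγ x => (hγ x).trans_lt (hγ₀neg x)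
  have hZ : IsClosed Z := by
    simp only [Z, ofPred_forall]
    exact isClosed_iInter fun x =>
      isClosed_le (hψ.continuous.comp (continuous_eval_const x)) continuous_const
  let Q : K → H → Prop := fun x u => ψ u < 0 ∨ u = ι x
  let X : Set C(K, H) := {γ | ContinuousMap.HomotopicWith ι γ fun η => ∀ x, Q x (η x)} ∩ Z
  have hX : IsClosed X :=
    isClosed_homotopicWith_inter (Q := Q) hnegOpen (fun _ _ => Or.inl) hZ hZneg
  have hstab : DescentStable ψ ψ (ψ u₀) X := fun F hF F' _ hseg =>
    ⟨hF.1.trans (homotopicWith_of_segment (Q := Q) fun x y hy =>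
      Or.inl ((hseg x y hy).trans_lt (hZneg F hF.2 x))),
      fun x => (hseg x _ (right_mem_segment ℝ _ _)).trans (hF.2 x)⟩
  obtain ⟨γ, hγX, hγ⟩ : ∃ γ ∈ X, ∀ x, ψ (γ x) < ψ u₀ + η := by
    by_contra! hlow
    obtain ⟨u, hu, hηu, huX⟩ := hPS.exists_critical_of_minimax hψ (lt_add_of_pos_right _ hη) hX
      ⟨γ₀, hγ₀, fun _ => le_rfl⟩ hstab hlow
    obtain ⟨x, hx⟩ := huX γ₀ ⟨hγ₀, fun _ => le_rfl⟩
    rw [hunique u hu (hx.trans_lt (hγ₀neg x))] at hηu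
    linarith
  exact hγX.1.trans (homotopicWith_of_segment (Q := Q) fun x y hy => Or.inl
    (hball ((convex_ball u₀ r).segment_subset (hηr _ (hγ x)) (Metric.mem_ball_self hr) hy)))

end Contraction

section Extension

variable {Y : Type*} [TopologicalSpace Y] {y₀ : Y}

lemma continuous_of_continuousOn_compl_singleton {α : Type*} [TopologicalSpace α] [T1Space α]
    {f : α → Y} {a : α} (hf : ContinuousOn f {a}ᶜ) (ha : ∀ᶠ x in 𝓝 a, f x = y₀) :
    Continuous f := by
  refine continuous_iff_continuousAt.2 fun x => ?_
  rcases eq_or_ne x a with rfl | hx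
  · exact continuousAt_const.congr (EventuallyEq.symm ha)
  · exact hf.continuousAt (isOpen_compl_singleton.mem_nhds hx)

lemma exists_extend_of_homotopy_const {E : Type*} [NormedAddCommGroup E] [NormedSpace ℝ E]
    {R : ℝ} (hR : 0 < R) {ι : C(Metric.sphere (0 : E) R, Y)} (h : ι.Homotopy (.const _ y₀)) :
    ∃ p : C(E, Y), (∀ x : Metric.sphere (0 : E) R, p x = ι x) ∧
      ∀ x, p x = y₀ ∨ ∃ q, p x = h q := by
  classical
  have hradial : ∀ x : E, x ≠ 0 → (R * ‖x‖⁻¹) • x ∈ Metric.sphere (0 : E) R := fun x hx => by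
    simp [norm_smul, abs_of_pos hR, norm_ne_zero_iff.2 hx]
  let t : E → unitInterval := fun x => projIcc 0 1 zero_le_one (2 * (1 - ‖x‖ / R))
  let p : E → Y := fun x => if hx : x = 0 then y₀ else h (t x, ⟨(R * ‖x‖⁻¹) • x, hradial x hx⟩)
  have hp : ∀ x (hx : x ≠ 0), p x = h (t x, ⟨(R * ‖x‖⁻¹) • x, hradial x hx⟩) :=
    fun x hx => dif_neg hx
  have hpcenter : ∀ x, ‖x‖ ≤ R / 2 → p x = y₀ := fun x hx => by
    rcases eq_or_ne x 0 with rfl | hx₀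
    · exact dif_pos rfl
    · have htx : t x = 1 := by
        refine projIcc_of_right_le zero_le_one ?_
        have : ‖x‖ / R ≤ 1 / 2 := by rw [div_le_iff₀ hR]; linarith
        linarith
      rw [hp x hx₀, htx]
      exact h.apply_one _
  have hpcont : ContinuousOn p {0}ᶜ := by
    have hrestrict : ({0}ᶜ : Set E).domRestrict p =
        fun x : ({0}ᶜ : Set E) => h (t x, ⟨(R * ‖(x : E)‖⁻¹) • (x : E), hradial x x.2⟩) :=
      funext fun x => hp x x.2
    have hinv : Continuous fun x : ({0}ᶜ : Set E) => ‖(x : E)‖⁻¹ :=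
      continuous_subtype_val.norm.inv₀ fun x => norm_ne_zero_iff.2 x.2
    rw [continuousOn_iff_continuous_domRestrict, hrestrict]
    exact h.continuous.comp
      (.prodMk (continuous_projIcc.comp (by fun_prop)) (.subtype_mk (by fun_prop) _))
  have hpnear : ∀ᶠ x in 𝓝 0, p x = y₀ := by
    filter_upwards [Metric.closedBall_mem_nhds (0 : E) (half_pos hR)] with x hx
    exact hpcenter x (mem_closedBall_zero_iff.1 hx)
  refine ⟨⟨p, continuous_of_continuousOn_compl_singleton hpcont hpnear⟩, fun x => ?_, fun x => ?_⟩
  · have hx : ‖(x : E)‖ = R := mem_sphere_zero_iff_norm.1 x.2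
    have htx : t x = 0 := projIcc_of_le_left zero_le_one (by simp [hx, hR.ne'])
    refine (hp x (norm_ne_zero_iff.1 (hx.trans_ne hR.ne'))).trans ?_
    simp [htx, hx, hR.ne']
  · by_cases hx : x = 0
    · exact Or.inl (dif_pos hx)
    · exact Or.inr ⟨_, hp x hx⟩

end Extension

section DistBump

variable {α : Type*} [PseudoMetricSpace α] {ε : ℝ≥0} {S : Set α} {u : α}

/-- The bump `max (ε² - ε d(u, S)) 0` of height `ε²` around a set `S`. Being `ε`-Lipschitz, it can
be added to a functional in order to keep almost critical points within distance `ε` of `S`. -/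
noncomputable def distBump (ε : ℝ≥0) (S : Set α) (u : α) : ℝ :=
  max (ε ^ 2 - ε * Metric.infDist u S) 0

lemma lipschitzWith_distBump (ε : ℝ≥0) (S : Set α) : LipschitzWith ε (distBump ε S) := by
  refine LipschitzWith.max_const (LipschitzWith.of_dist_le_mul fun u v => ?_) 0
  rw [dist_sub_left, Real.dist_eq, ← mul_sub, abs_mul, NNReal.abs_eq, ← Real.dist_eq]
  gcongr
  simpa using (Metric.lipschitz_infDist_pt S).dist_le_mul u v

lemma distBump_le : distBump ε S u ≤ ε ^ 2 :=
  max_le (sub_le_self _ (mul_nonneg ε.2 Metric.infDist_nonneg)) (by positivity)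

lemma distBump_of_mem (hu : u ∈ S) : distBump ε S u = ε ^ 2 := by
  simp [distBump, Metric.infDist_zero_of_mem hu]

lemma distBump_of_le_infDist (hu : ε ≤ Metric.infDist u S) : distBump ε S u = 0 := by
  refine max_eq_right (sub_nonpos.2 ?_)
  rw [sq]
  exact mul_le_mul_of_nonneg_left hu ε.2

end DistBump

section Linking

variable {K : Type*} [TopologicalSpace K]

lemma isClosed_setOf_eqOn {Y : Type*} [TopologicalSpace Y] [T2Space Y] (F₀ : C(K, Y)) (B : Set K) :
    IsClosed {F : C(K, Y) | EqOn F F₀ B} := by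
  simp only [EqOn, ofPred_forall]
  exact isClosed_biInter fun x _ => isClosed_eq (continuous_eval_const x) continuous_const

variable {H : Type*} [NormedAddCommGroup H] [NormedSpace ℝ H] [CompleteSpace H]
  [CompactSpace K] [T2Space K] {ψ : H → ℝ} {ε : ℝ≥0} {S : Set H} {F₀ : C(K, H)} {B : Set K}

lemma exists_almost_critical_near_of_linking (hψ : ContDiff ℝ 1 ψ)
    (hlink : ∀ F : C(K, H), EqOn F F₀ B → ∃ x, F x ∈ S) (hψB : ∀ x ∈ B, ψ (F₀ x) ≤ 0)
    (hψS : ∀ u ∈ S, 0 ≤ ψ u) (hε : 0 < ε) (hεB : ∀ x ∈ B, ε ≤ Metric.infDist (F₀ x) S)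
    (hF₀ : ∀ x, ψ (F₀ x) ≤ ε ^ 2 / 2) :
    ∃ u, ∃ v ∈ S, dist u v < ε ∧ 0 ≤ ψ u ∧ ψ u ≤ ε ^ 2 / 2 ∧ ‖fderiv ℝ ψ u‖ ≤ 3 * ε := by
  have hε' : (0 : ℝ) < ε := hε
  let χ : H → ℝ := fun u => ψ u + distBump ε S u
  let X : Set C(K, H) := {F | EqOn F F₀ B} ∩ {F | ∀ x, ψ (F x) ≤ ψ (F₀ x)}
  have hX : IsClosed X := by
    refine (isClosed_setOf_eqOn F₀ B).inter ?_
    simp only [ofPred_forall]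
    exact isClosed_iInter fun x =>
      isClosed_le (hψ.continuous.comp (continuous_eval_const x)) continuous_const
  have hχB : ∀ F ∈ X, ∀ x ∈ B, χ (F x) ≤ 0 := fun F hF x hx => by
    simpa [χ, hF.1 hx, distBump_of_le_infDist (hεB x hx)] using hψB x hx
  have hstab : DescentStable ψ χ 0 X := fun F hF F' hF' hseg =>
    ⟨fun x hx => (hF' x (hχB F hF x hx)).trans (hF.1 hx),
      fun x => (hseg x _ (right_mem_segment ℝ _ _)).trans (hF.2 x)⟩
  have hlow : ∀ F ∈ X, ∃ x, (ε : ℝ) ^ 2 ≤ χ (F x) := fun F hF => by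
    obtain ⟨x, hx⟩ := hlink F hF.1
    exact ⟨x, by simpa [χ, distBump_of_mem hx] using hψS _ hx⟩
  obtain ⟨F, hF, x, -, hχ, -, hder⟩ := exists_almost_critical_of_minimax (g := (ε : ℝ) ^ 2 / 2) hψ
    (by simpa [χ] using lipschitzWith_distBump ε S) hε' (by positivity) hX hstab hlow
    ⟨fun _ _ => rfl, fun _ => le_rfl⟩ fun x => by
      linarith [hF₀ x, distBump_le (ε := ε) (S := S) (u := F₀ x)]
  have hSne : S.Nonempty := (hlink F hF.1).elim fun x hx => ⟨F x, hx⟩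
  have hψF : ψ (F x) ≤ ε ^ 2 / 2 := (hF.2 x).trans (hF₀ x)
  have hnear : Metric.infDist (F x) S < ε := by
    by_contra! hfar
    have : (ε : ℝ) ^ 2 ≤ ψ (F x) := by simpa [χ, distBump_of_le_infDist hfar] using hχ
    linarith [pow_pos hε' 2]
  obtain ⟨v, hv, hdist⟩ := (Metric.infDist_lt_iff hSne).1 hnear
  exact ⟨F x, v, hv, hdist, by linarith [distBump_le (ε := ε) (S := S) (u := F x)], hψF,
    hder.trans_eq (by ring)⟩

theorem PalaisSmale.exists_critical_of_linking (hPS : PalaisSmale ψ) (hψ : ContDiff ℝ 1 ψ)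
    (hB : IsClosed B) (hS : IsClosed S) (hlink : ∀ F : C(K, H), EqOn F F₀ B → ∃ x, F x ∈ S)
    (hψB : ∀ x ∈ B, ψ (F₀ x) ≤ 0) (hψS : ∀ u ∈ S, 0 ≤ ψ u) (hBS : ∀ x ∈ B, F₀ x ∉ S) :
    ∃ u, fderiv ℝ ψ u = 0 ∧ (0 < ψ u ∨ ψ u = 0 ∧ u ∈ S) := by
  by_cases hpos : ∃ c > 0, ∀ F : C(K, H), EqOn F F₀ B → ∃ x, c ≤ ψ (F x)
  · obtain ⟨c, hc, hlow⟩ := hpos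
    obtain ⟨u, hu, hcu, -⟩ := hPS.exists_critical_of_minimax hψ hc (isClosed_setOf_eqOn F₀ B)
      ⟨F₀, eqOn_refl F₀ B⟩ (fun F hF F' hF' _ x hx =>
        (hF' x ((congrArg ψ (hF hx)).trans_le (hψB x hx))).trans (hF hx)) hlow
    exact ⟨u, hu, Or.inl (hc.trans_le hcu)⟩
  · push Not at hpos
    have hSne : S.Nonempty := (hlink F₀ (eqOn_refl F₀ B)).elim fun x hx => ⟨F₀ x, hx⟩
    obtain ⟨d, hd, hdB⟩ := hB.isCompact.exists_forall_le'
      ((Metric.continuous_infDist_pt S).comp F₀.continuous).continuousOn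
      fun x hx => (hS.notMem_iff_infDist_pos hSne).1 (hBS x hx)
    obtain ⟨u, huS, hψu, hu⟩ := hPS.exists_mem_fderiv_eq_zero hψ hS (c := 0) fun ε₀ hε₀ => by
      obtain ⟨ε, hε, hεε₀, hε₁, hεd⟩ : ∃ ε > 0, ε ≤ ε₀ / 3 ∧ ε ≤ 1 ∧ ε ≤ d :=
        ⟨min (ε₀ / 3) (min 1 d), by positivity, by simp⟩
      lift ε to ℝ≥0 using hε.le
      obtain ⟨F, hFB, hF⟩ := hpos ((ε : ℝ) ^ 2 / 2) (by positivity)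
      obtain ⟨u, v, hv, hdist, hψu, hψu', hder⟩ :=
        exists_almost_critical_near_of_linking (F₀ := F) hψ
          (fun F' hF' => hlink F' (hF'.trans hFB)) (fun x hx => hFB hx ▸ hψB x hx) hψS hε
          (fun x hx => hFB hx ▸ hεd.trans (hdB x hx)) fun x => (hF x).le
      refine ⟨u, v, hv, by linarith, ?_, by linarith⟩
      rw [sub_zero, abs_of_nonneg hψu]
      linarith [pow_le_of_le_one hε.le hε₁ two_ne_zero]
    exact ⟨u, hu, Or.inr ⟨hψu, huS⟩⟩

end Linking

section Cap

lemma eq_zero_of_radialRetraction_sub_eq {E : Type*} [NormedAddCommGroup E] [NormedSpace ℝ E]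
    {R : ℝ} (hR : 0 < R) {x y : E} (hxy : radialRetraction R (x - y) = x)
    (hy : ‖x‖ = R → y = x) : y = 0 := by
  rcases le_or_gt ‖x - y‖ R with h | h
  · simpa [radialRetraction_of_norm_le hR h] using hxy
  · have hx : ‖x‖ = R := hxy ▸ norm_radialRetraction_of_le_norm hR h.le
    rw [hy hx, sub_self, norm_zero] at h
    exact absurd h hR.not_gt

lemma eq_zero_or_eq_one_or_eq_zero_of_projIcc_sub_eq {t : unitInterval} {a : ℝ}
    (h : projIcc 0 1 zero_le_one ((t : ℝ) - a) = t) : a = 0 ∨ a < 0 ∧ t = 1 ∨ 0 < a ∧ t = 0 := by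
  by_cases hle : (t : ℝ) - a ≤ 0
  · rw [projIcc_of_le_left _ hle] at h
    subst h
    have ha : 0 ≤ a := by simpa using hle
    exact ha.eq_or_lt.imp Eq.symm fun ha => Or.inr ⟨ha, rfl⟩
  by_cases hge : 1 ≤ (t : ℝ) - a
  · rw [projIcc_of_right_le _ hge] at h
    subst h
    have ha : a ≤ 0 := by simpa using hge
    exact ha.eq_or_lt.imp id fun ha => Or.inl ⟨ha, rfl⟩
  · rw [projIcc_of_mem _ ⟨(not_le.1 hle).le, (not_le.1 hge).le⟩] at h
    exact Or.inl (sub_eq_self.1 (congrArg Subtype.val h))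

lemma exists_eq_zero_and_eq_of_boundary {E : Type*} [NormedAddCommGroup E] [NormedSpace ℝ E]
    [FiniteDimensional ℝ E] {R c : ℝ} (hR : 0 < R)
    {G : C(Metric.closedBall (0 : E) R × unitInterval, E)}
    {N : C(Metric.closedBall (0 : E) R × unitInterval, ℝ)}
    (hside : ∀ z, ‖(z.1 : E)‖ = R → G z = z.1) (hbot : ∀ z, z.2 = 0 → G z = 0 → N z ≤ c)
    (htop : ∀ z, z.2 = 1 → G z = 0 → c ≤ N z) :
    ∃ z, G z = 0 ∧ N z = c := by
  have : CompactSpace (Metric.closedBall (0 : E) R) :=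
    isCompact_iff_compactSpace.1 (isCompact_closedBall _ _)
  have hret : Continuous (radialRetraction R : E → E) :=
    (lipschitzWith_radialRetraction hR).continuous
  let i : C(Metric.closedBall (0 : E) R × unitInterval, E × ℝ) :=
    ⟨fun z => (z.1, z.2), by fun_prop⟩
  let r : C(E × ℝ, Metric.closedBall (0 : E) R × unitInterval) :=
    ⟨fun w => (⟨radialRetraction R w.1, mem_closedBall_zero_iff.2 (norm_radialRetraction_le hR _)⟩,
      projIcc 0 1 zero_le_one w.2), by fun_prop⟩
  have hri : Function.LeftInverse r i := fun z => by
    refine Prod.ext (Subtype.ext ?_) (projIcc_val zero_le_one z.2)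
    exact radialRetraction_of_norm_le hR (mem_closedBall_zero_iff.1 z.1.2)
  obtain ⟨z, hz⟩ := brouwer_exists_isFixedPt_of_retract i r hri
    (r.comp ⟨fun z => (z.1 - G z, z.2 - (N z - c)), by fun_prop⟩)
  have hG : G z = 0 :=
    eq_zero_of_radialRetraction_sub_eq hR (congrArg (fun z => (z.1 : E)) hz) (hside z)
  refine ⟨z, hG, sub_eq_zero.1 ?_⟩
  rcases eq_zero_or_eq_one_or_eq_zero_of_projIcc_sub_eq (congrArg Prod.snd hz) with
    h | ⟨h, hz₂⟩ | ⟨h, hz₂⟩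
  · exact h
  · exact absurd (htop z hz₂ hG) (sub_neg.1 h).not_ge
  · exact absurd (hbot z hz₂ hG) (sub_pos.1 h).not_ge

variable {H : Type*} [NormedAddCommGroup H] [NormedSpace ℝ H] {H₁ : Submodule ℝ H} {R δ : ℝ}

/-- The affine homotopy, parametrised by a cylinder, from the closed ball of radius `R` of the
subspace `H₁` to the cap `p`. -/
def capHomotopy (R : ℝ) (p : C(H₁, H)) : C(Metric.closedBall (0 : H₁) R × unitInterval, H) where
  toFun z := AffineMap.lineMap (z.1 : H) (p z.1) (z.2 : ℝ)
  continuous_toFun := by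
    simp only [AffineMap.lineMap_apply_module]
    fun_prop

/-- The boundary of the cylinder over the closed ball of radius `R`, with the bottom and the side
grouped together because `capHomotopy R p` is the inclusion on both when `p` fixes the sphere. -/
def cylinderBoundary (E : Type*) [NormedAddCommGroup E] (R : ℝ) :
    Set (Metric.closedBall (0 : E) R × unitInterval) :=
  {z | z.2 = 0 ∨ ‖(z.1 : E)‖ = R} ∪ {z | z.2 = 1}

lemma isClosed_cylinderBoundary (E : Type*) [NormedAddCommGroup E] (R : ℝ) :
    IsClosed (cylinderBoundary E R) :=
  ((isClosed_eq continuous_snd continuous_const).union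
    (isClosed_eq (by fun_prop) continuous_const)).union
    (isClosed_eq continuous_snd continuous_const)

variable {p : C(H₁, H)} {z : Metric.closedBall (0 : H₁) R × unitInterval}

lemma capHomotopy_of_eq_one (hz : z.2 = 1) : capHomotopy R p z = p z.1 := by
  simp [capHomotopy, hz]

lemma capHomotopy_of_eq_zero_or_norm_eq (hpR : ∀ x, ‖x‖ = R → p x = x)
    (hz : z.2 = 0 ∨ ‖(z.1 : H₁)‖ = R) : capHomotopy R p z = z.1 := by
  rcases hz with hz | hz
  · simp [capHomotopy, hz]
  · simp [capHomotopy, hpR _ hz]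

variable [FiniteDimensional ℝ H₁] {P : H →L[ℝ] H₁}

lemma exists_eq_zero_and_norm_eq_of_eqOn_capHomotopy (hP : ∀ x : H₁, P x = x) (hR : 0 < R)
    (hδ : 0 ≤ δ) (hpR : ∀ x, ‖x‖ = R → p x = x) (hpδ : ∀ x, P (p x) = 0 → δ ≤ ‖p x‖)
    {F : C(Metric.closedBall (0 : H₁) R × unitInterval, H)}
    (hF : EqOn F (capHomotopy R p) (cylinderBoundary H₁ R)) :
    ∃ z, P (F z) = 0 ∧ ‖F z‖ = δ := by
  have hflat : ∀ z, z.2 = 0 ∨ ‖(z.1 : H₁)‖ = R → F z = z.1 := fun z hz =>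
    (hF (Or.inl hz)).trans (capHomotopy_of_eq_zero_or_norm_eq hpR hz)
  have hcap : ∀ z, z.2 = 1 → F z = p z.1 := fun z hz =>
    (hF (Or.inr hz)).trans (capHomotopy_of_eq_one hz)
  refine exists_eq_zero_and_eq_of_boundary hR (G := ⟨fun z => P (F z), by fun_prop⟩)
    (N := ⟨fun z => ‖F z‖, by fun_prop⟩) (fun z hz => ?_) (fun z hz hPz => ?_) fun z hz hPz => ?_
  · exact (congrArg P (hflat z (Or.inr hz))).trans (hP _)
  · simp only [ContinuousMap.coe_mk, hflat z (Or.inl hz), hP] at hPz ⊢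
    simpa [hPz] using hδ
  · simp only [ContinuousMap.coe_mk, hcap z hz] at hPz ⊢
    exact hpδ _ hPz

variable [CompleteSpace H] {ψ : H → ℝ}

lemma PalaisSmale.exists_critical_of_cap (hPS : PalaisSmale ψ) (hψ : ContDiff ℝ 1 ψ)
    (hP : ∀ x : H₁, P x = x) (hR : 0 < R) (hδ : 0 < δ) (hψ₁ : ∀ x : H₁, ‖x‖ ≤ R → ψ x ≤ 0)
    (hψ₂ : ∀ u, P u = 0 → ‖u‖ = δ → 0 ≤ ψ u) (hpR : ∀ x, ‖x‖ = R → p x = x)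
    (hpψ : ∀ x, ψ (p x) ≤ 0) (hpδ : ∀ x, P (p x) = 0 → δ < ‖p x‖) :
    ∃ u ≠ 0, 0 ≤ ψ u ∧ fderiv ℝ ψ u = 0 := by
  have : CompactSpace (Metric.closedBall (0 : H₁) R) :=
    isCompact_iff_compactSpace.1 (isCompact_closedBall _ _)
  let S : Set H := {u | P u = 0 ∧ ‖u‖ = δ}
  have hS : IsClosed S := (isClosed_eq P.continuous continuous_const).inter
    (isClosed_eq continuous_norm continuous_const)
  have hψB : ∀ z ∈ cylinderBoundary H₁ R, ψ (capHomotopy R p z) ≤ 0 := by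
    rintro z (hz | hz)
    · exact capHomotopy_of_eq_zero_or_norm_eq hpR hz ▸ hψ₁ _ (mem_closedBall_zero_iff.1 z.1.2)
    · exact capHomotopy_of_eq_one (p := p) hz ▸ hpψ _
  have hBS : ∀ z ∈ cylinderBoundary H₁ R, capHomotopy R p z ∉ S := by
    rintro z (hz | hz) ⟨hPz, hzδ⟩
    · rw [capHomotopy_of_eq_zero_or_norm_eq hpR hz] at hPz hzδ
      rw [← hP z.1, hPz, Submodule.coe_zero, norm_zero] at hzδ
      exact hδ.ne hzδ
    · rw [capHomotopy_of_eq_one hz] at hPz hzδ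
      exact (hpδ _ hPz).ne' hzδ
  obtain ⟨u, hu, hψu⟩ := hPS.exists_critical_of_linking hψ (isClosed_cylinderBoundary H₁ R) hS
    (fun F hF => exists_eq_zero_and_norm_eq_of_eqOn_capHomotopy hP hR hδ.le hpR
      (fun x hx => (hpδ x hx).le) hF) hψB (fun u hu => hψ₂ u hu.1 hu.2) hBS
  refine ⟨u, ?_, hψu.elim le_of_lt fun h => h.1.ge, hu⟩
  rintro rfl
  rcases hψu with hψ0 | ⟨-, -, h0δ⟩
  · exact hψ0.not_ge (by simpa using hψ₁ 0 (by simpa using hR.le))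
  · exact hδ.ne (norm_zero.symm.trans h0δ)

lemma PalaisSmale.exists_critical_of_homotopicWith_const (hPS : PalaisSmale ψ)
    (hψ : ContDiff ℝ 1 ψ) (hP : ∀ x : H₁, P x = x) (hR : 0 < R) (hδ : 0 < δ)
    (hψ₁ : ∀ x : H₁, ‖x‖ ≤ R → ψ x ≤ 0) (hψ₂ : ∀ u, P u = 0 → ‖u‖ ≤ δ → 0 ≤ ψ u) {u₀ : H}
    (hneg : ψ u₀ < 0) {ι : C(Metric.sphere (0 : H₁) R, H)} (hι : ∀ x, ι x = x)
    (hhom : ContinuousMap.HomotopicWith ι (.const _ u₀) fun η => ∀ x, ψ (η x) < 0 ∨ η x = ι x) :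
    ∃ u ≠ 0, 0 ≤ ψ u ∧ fderiv ℝ ψ u = 0 := by
  obtain ⟨h⟩ := hhom
  obtain ⟨p, hpι, hp⟩ := exists_extend_of_homotopy_const hR h.toHomotopy
  have hp' : ∀ x, ψ (p x) < 0 ∨ ∃ z : Metric.sphere (0 : H₁) R, p x = z := fun x => by
    rcases hp x with hx | ⟨⟨t, z⟩, hx⟩
    · exact Or.inl (hx ▸ hneg)
    · exact (h.prop t z).imp (fun hz => hx ▸ hz) fun hz => ⟨z, hx.trans (hz.trans (hι z))⟩
  refine hPS.exists_critical_of_cap hψ hP hR hδ hψ₁ (fun u hu huδ => hψ₂ u hu huδ.le) (p := p)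
    (fun x hx => (hpι ⟨x, mem_sphere_zero_iff_norm.2 hx⟩).trans (hι _)) (fun x => ?_)
    fun x hPx => ?_
  · rcases hp' x with hx | ⟨z, hx⟩
    · exact hx.le
    · exact hx ▸ hψ₁ z (mem_sphere_zero_iff_norm.1 z.2).le
  · by_contra! hxδ
    rcases hp' x with hx | ⟨z, hx⟩
    · exact (hψ₂ _ hPx hxδ).not_gt hx
    · rw [hx, hP] at hPx
      exact ne_zero_of_mem_sphere hR.ne' z hPx

theorem PalaisSmale.exists_critical_nonneg_of_unique_neg (hPS : PalaisSmale ψ)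
    (hψ : ContDiff ℝ 1 ψ) (hP : ∀ x : H₁, P x = x) (hR : 0 < R) (hδ : 0 < δ)
    (hψ₁ : ∀ x : H₁, ‖x‖ ≤ R → ψ x ≤ 0) (hψ₂ : ∀ u, P u = 0 → ‖u‖ ≤ δ → 0 ≤ ψ u) {u₀ : H}
    (hmin : ∀ u, ψ u₀ ≤ ψ u) (hneg : ψ u₀ < 0) (hu₀ : ‖u₀‖ ≠ R)
    (hunique : ∀ u, fderiv ℝ ψ u = 0 → ψ u < 0 → u = u₀) :
    ∃ u ≠ 0, 0 ≤ ψ u ∧ fderiv ℝ ψ u = 0 := by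
  by_contra! hnone
  let ι : C(Metric.sphere (0 : H₁) R, H) := ⟨fun x => x, by fun_prop⟩
  have hι : ∀ x, ‖ι x‖ = R := fun x => mem_sphere_zero_iff_norm.1 x.2
  have hcrit : ∀ x, fderiv ℝ ψ (ι x) ≠ 0 := fun x hx => by
    rcases lt_or_ge (ψ (ι x)) 0 with hψx | hψx
    · exact hu₀ (hunique _ hx hψx ▸ hι x)
    · exact hnone (ι x) (norm_ne_zero_iff.1 ((hι x).trans_ne hR.ne')) hψx hx
  obtain ⟨u, hu, hψu, hcritu⟩ := hPS.exists_critical_of_homotopicWith_const hψ hP hR hδ hψ₁ hψ₂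
    hneg (ι := ι) (fun _ => rfl)
    (hPS.homotopicWith_const_of_forall_le hψ hmin hneg hunique (fun x => hψ₁ x (hι x).le) hcrit)
  exact hnone u hu hψu hcritu

end Cap

/-- Brezis–Nirenberg critical point theorem (Lemma 2.2 of the paper). -/
theorem statement_1
    (H : Type*) [NormedAddCommGroup H] [NormedSpace ℝ H] [CompleteSpace H]
    (H₁ H₂ : Submodule ℝ H) (hcompl : IsCompl H₁ H₂)
    (hH₁closed : IsClosed (H₁ : Set H)) (hH₂closed : IsClosed (H₂ : Set H))
    [FiniteDimensional ℝ H₁]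
    (ψ : H → ℝ) (hψC1 : ContDiff ℝ 1 ψ) (hψ0 : ψ 0 = 0)
    -- Palais–Smale condition
    (hPS : ∀ (a : ℝ) (u : ℕ → H),
      Filter.Tendsto (fun n => ψ (u n)) Filter.atTop (nhds a) →
      Filter.Tendsto (fun n => ‖fderiv ℝ ψ (u n)‖) Filter.atTop (nhds 0) →
      ∃ (φ : ℕ → ℕ), StrictMono φ ∧ ∃ x : H,
        Filter.Tendsto (fun n => u (φ n)) Filter.atTop (nhds x))
    (δ : ℝ) (hδ : 0 < δ)
    -- (P1)
    (hP1 : ∀ u ∈ H₁, ‖u‖ ≤ δ → ψ u ≤ 0)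
    -- (P2)
    (hP2 : ∀ u ∈ H₂, ‖u‖ ≤ δ → 0 ≤ ψ u)
    -- (P3)
    (hbdd : BddBelow (Set.range ψ)) (hinf : (⨅ u : H, ψ u) < 0) :
    ∃ u v : H, u ≠ 0 ∧ v ≠ 0 ∧ u ≠ v ∧ fderiv ℝ ψ u = 0 ∧ fderiv ℝ ψ v = 0 := by
  obtain ⟨u₀, hmin⟩ := PalaisSmale.exists_forall_le hPS hψC1 hbdd
  have hcrit₀ : fderiv ℝ ψ u₀ = 0 := IsLocalMin.fderiv_eq_zero (Eventually.of_forall hmin)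
  have hneg : ψ u₀ < 0 := (le_ciInf hmin).trans_lt hinf
  have hu₀ : u₀ ≠ 0 := fun h => (h ▸ hneg).ne hψ0
  by_contra! honly
  have hunique : ∀ u ≠ 0, fderiv ℝ ψ u = 0 → u = u₀ := fun u hu hcrit => by
    by_contra hne
    exact honly u u₀ hu hu₀ hne hcrit hcrit₀
  obtain ⟨R, hR, hRδ, hRu₀⟩ : ∃ R > 0, R ≤ δ ∧ R < ‖u₀‖ :=
    ⟨min δ (‖u₀‖ / 2), by positivity, min_le_left _ _,
      (min_le_right _ _).trans_lt (half_lt_self (norm_pos_iff.2 hu₀))⟩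
  have htop := Submodule.IsCompl.isTopCompl_of_isClosed hcompl hH₁closed hH₂closed
  obtain ⟨u, hu, hψu, hcrit⟩ := PalaisSmale.exists_critical_nonneg_of_unique_neg hPS hψC1
    (Submodule.projectionOntoL_apply_left htop) hR hδ (fun x hx => hP1 x x.2 (hx.trans hRδ))
    (fun u hu => hP2 u ((Submodule.projectionOntoL_apply_eq_zero_iff htop).1 hu)) hmin hneg hRu₀.ne'
    fun u hu hψu => hunique u (by rintro rfl; exact hψu.ne hψ0) hu
  exact hneg.not_ge (hunique u hu hcrit ▸ hψu)
end

section
/- Let a, b, τ be real numbers with a > b > 0 and τ > 0, and let λ > 0 be the unique positive solution of λ = a − b·e^{λτ}. Let V : ℝ → ℝ be nonnegative and continuous on [−τ, ∞), differentiable on (0, ∞), and suppose that for every t > 0, V′(t) ≤ −a·V(t) + b·sup_{s ∈ [t−τ, t]} V(s). Then V(t) ≤ ( sup_{s ∈ [−τ, 0]} V(s) )·e^{−λt} for all t ≥ 0. -/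
open Set

/-! If `V` starts strictly below a function `W` that satisfies the reversed, strict delay
inequality, then `V` stays below `W`: at a first contact time the whole delay window of `V` lies
below that of `W`, so the inequalities give `V' < W'`, whereas a graph reaching another one from
below has at least its slope. The exponential `K * exp (-lam * t)` satisfies the reversed
inequality only weakly; adding `ε * exp t` makes it strict because `lam ≥ 0` forces `b ≤ a`. Then
let `ε → 0`. -/

open scoped Topology

section FirstContact

variable {α β : Type*} [ConditionallyCompleteLinearOrder α] [DenselyOrdered α]
  [TopologicalSpace α] [OrderTopology α] [LinearOrder β] [TopologicalSpace β]
  [OrderClosedTopology β]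

theorem exists_first_contact {f g : α → β} {t₀ t₁ : α} (hf : ContinuousOn f (Ici t₀))
    (hg : ContinuousOn g (Ici t₀)) (h₀ : f t₀ < g t₀) (ht₁ : t₀ ≤ t₁) (h₁ : g t₁ ≤ f t₁) :
    ∃ t > t₀, (∀ s ∈ Ico t₀ t, f s < g s) ∧ f t = g t := by
  obtain ⟨t, ⟨ht, hgf⟩, hleast⟩ : ∃ t, IsLeast {s ∈ Ici t₀ | g s ≤ f s} t :=
    ⟨_, (isClosed_Ici.isClosed_le hg hf).isLeast_csInf ⟨t₁, ht₁, h₁⟩ ⟨t₀, fun _ hs => hs.1⟩⟩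
  have hlt : ∀ s ∈ Ico t₀ t, f s < g s := fun s hs =>
    not_le.1 fun hle => hs.2.not_ge (hleast ⟨hs.1, hle⟩)
  have hne : t₀ ≠ t := by
    rintro rfl
    exact hgf.not_gt h₀
  have hclosure : closure (Ico t₀ t) = Icc t₀ t := closure_Ico hne
  have hfg : f t ≤ g t :=
    le_on_closure (fun s hs => (hlt s hs).le) (hf.mono (hclosure ▸ Icc_subset_Ici_self))
      (hg.mono (hclosure ▸ Icc_subset_Ici_self)) (hclosure ▸ right_mem_Icc.2 ht)
  exact ⟨t, lt_of_le_of_ne ht hne, hlt, hfg.antisymm hgf⟩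

end FirstContact

theorem leftDeriv_le_of_eventually_le {f g : ℝ → ℝ} {f' g' t : ℝ}
    (hf : HasDerivWithinAt f f' (Iic t) t) (hg : HasDerivWithinAt g g' (Iic t) t)
    (hle : ∀ᶠ s in 𝓝[<] t, f s ≤ g s) (heq : f t = g t) : g' ≤ f' := by
  have hslope_f := (hasDerivWithinAt_iff_tendsto_slope' self_notMem_Iio).1 hf.Iio_of_Iic
  have hslope_g := (hasDerivWithinAt_iff_tendsto_slope' self_notMem_Iio).1 hg.Iio_of_Iic
  refine le_of_tendsto_of_tendsto hslope_g hslope_f ?_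
  filter_upwards [hle, self_mem_nhdsWithin] with s hs hst
  rw [slope_def_field, slope_def_field, heq]
  exact div_le_div_of_nonpos_of_le (sub_nonpos.2 (le_of_lt hst)) (sub_le_sub_right hs _)

theorem lt_of_leftDeriv_lt_at_first_contact {f g f' g' : ℝ → ℝ} {t₀ : ℝ}
    (hf : ContinuousOn f (Ici t₀)) (hg : ContinuousOn g (Ici t₀))
    (hf' : ∀ t > t₀, HasDerivWithinAt f (f' t) (Iic t) t)
    (hg' : ∀ t > t₀, HasDerivWithinAt g (g' t) (Iic t) t) (h₀ : f t₀ < g t₀)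
    (hcontact : ∀ t > t₀, (∀ s ∈ Ico t₀ t, f s < g s) → f t = g t → f' t < g' t) :
    ∀ t ≥ t₀, f t < g t := by
  by_contra! ⟨t₁, ht₁, h₁⟩
  obtain ⟨t, ht, hlt, heq⟩ := exists_first_contact hf hg h₀ ht₁ h₁
  have hle : ∀ᶠ s in 𝓝[<] t, f s ≤ g s := by
    filter_upwards [Ico_mem_nhdsLT ht] with s hs using (hlt s hs).le
  exact (hcontact t ht hlt heq).not_ge
    (leftDeriv_le_of_eventually_le (hf' t ht) (hg' t ht) hle heq)

theorem csSup_image_le_csSup_image {ι α : Type*} [ConditionallyCompleteLattice α] {s : Set ι}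
    {f g : ι → α} (hs : s.Nonempty) (hg : BddAbove (g '' s)) (hfg : ∀ i ∈ s, f i ≤ g i) :
    sSup (f '' s) ≤ sSup (g '' s) :=
  csSup_le (hs.image f) <| forall_mem_image.2 fun i hi =>
    le_csSup_of_le hg (mem_image_of_mem g hi) (hfg i hi)

theorem lt_of_delay_differential_inequality {a b τ : ℝ} (hb : 0 ≤ b) (hτ : 0 ≤ τ)
    {V V' W W' : ℝ → ℝ} (hV : ContinuousOn V (Ici 0)) (hW : ContinuousOn W (Ici (-τ)))
    (hV' : ∀ t > 0, HasDerivWithinAt V (V' t) (Iic t) t)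
    (hW' : ∀ t > 0, HasDerivWithinAt W (W' t) (Iic t) t)
    (hsub : ∀ t > 0, V' t ≤ -a * V t + b * sSup (V '' Icc (t - τ) t))
    (hsuper : ∀ t > 0, -a * W t + b * sSup (W '' Icc (t - τ) t) < W' t)
    (hinit : ∀ s ∈ Icc (-τ) 0, V s < W s) :
    ∀ t ≥ 0, V t < W t := by
  have hW₀ : ContinuousOn W (Ici 0) := hW.mono (Ici_subset_Ici.2 (by linarith))
  refine lt_of_leftDeriv_lt_at_first_contact hV hW₀ hV' hW'
    (hinit 0 ⟨by linarith, le_rfl⟩) fun t ht hlt heq => ?_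
  have hwindow : ∀ s ∈ Icc (t - τ) t, V s ≤ W s := by
    intro s hs
    rcases hs.2.eq_or_lt with rfl | hst
    · exact heq.le
    rcases le_total 0 s with hs₀ | hs₀
    · exact (hlt s ⟨hs₀, hst⟩).le
    · exact (hinit s ⟨by linarith [hs.1], hs₀⟩).le
  have hbdd : BddAbove (W '' Icc (t - τ) t) :=
    isCompact_Icc.bddAbove_image (hW.mono fun s hs => mem_Ici.2 (by linarith [hs.1]))
  have hsup : sSup (V '' Icc (t - τ) t) ≤ sSup (W '' Icc (t - τ) t) :=
    csSup_image_le_csSup_image (nonempty_Icc.2 (by linarith)) hbdd hwindow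
  calc V' t ≤ -a * V t + b * sSup (V '' Icc (t - τ) t) := hsub t ht
    _ ≤ -a * W t + b * sSup (W '' Icc (t - τ) t) := by rw [heq]; gcongr
    _ < W' t := hsuper t ht

/-- The comparison function of Halanay's inequality: the decaying exponential with rate `lam` and
amplitude `K`, perturbed by `ε * exp t` so that it satisfies the delay inequality strictly. -/
noncomputable def halanayBarrier (lam K ε t : ℝ) : ℝ :=
  K * Real.exp (-lam * t) + ε * Real.exp t

namespace halanayBarrier

variable {a b τ lam K ε : ℝ}

theorem hasDerivAt (lam K ε t : ℝ) :
    HasDerivAt (halanayBarrier lam K ε) (-lam * (K * Real.exp (-lam * t)) + ε * Real.exp t) t := by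
  have hdecay : HasDerivAt (fun t => Real.exp (-lam * t)) (Real.exp (-lam * t) * -lam) t :=
    (hasDerivAt_const_mul (-lam)).exp
  exact ((hdecay.const_mul K).add ((Real.hasDerivAt_exp t).const_mul ε)).congr_deriv (by ring)

theorem continuous (lam K ε : ℝ) : Continuous (halanayBarrier lam K ε) :=
  continuous_iff_continuousAt.2 fun t => (hasDerivAt lam K ε t).continuousAt

theorem lt_of_nonpos (hlam : 0 ≤ lam) (hK : 0 ≤ K) (hε : 0 < ε) {s : ℝ} (hs : s ≤ 0) :
    K < halanayBarrier lam K ε s := by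
  have hexp : 1 ≤ Real.exp (-lam * s) :=
    Real.one_le_exp (mul_nonneg_of_nonpos_of_nonpos (neg_nonpos.2 hlam) hs)
  calc K ≤ K * Real.exp (-lam * s) := le_mul_of_one_le_right hK hexp
    _ < halanayBarrier lam K ε s := lt_add_of_pos_right _ (by positivity)

theorem sSup_image_Icc_le (hτ : 0 ≤ τ) (hlam : 0 ≤ lam) (hK : 0 ≤ K) (hε : 0 ≤ ε) (t : ℝ) :
    sSup (halanayBarrier lam K ε '' Icc (t - τ) t) ≤
      K * Real.exp (-lam * t) * Real.exp (lam * τ) + ε * Real.exp t := by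
  have hshift : -lam * t + lam * τ = -lam * (t - τ) := by ring
  rw [mul_assoc, ← Real.exp_add, hshift]
  refine csSup_le ((nonempty_Icc.2 (by linarith)).image _) (forall_mem_image.2 fun s hs => ?_)
  have hdecay : -lam * s ≤ -lam * (t - τ) := mul_le_mul_of_nonpos_left hs.1 (neg_nonpos.2 hlam)
  have hst : s ≤ t := hs.2
  unfold halanayBarrier
  gcongr

theorem delay_differential_inequality (hb : 0 ≤ b) (hτ : 0 ≤ τ) (hlam_nonneg : 0 ≤ lam)
    (hlam : lam ≤ a - b * Real.exp (lam * τ)) (hK : 0 ≤ K) (hε : 0 < ε) (t : ℝ) :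
    -a * halanayBarrier lam K ε t + b * sSup (halanayBarrier lam K ε '' Icc (t - τ) t) <
      -lam * (K * Real.exp (-lam * t)) + ε * Real.exp t := by
  have hba : b ≤ a := by
    have : b ≤ b * Real.exp (lam * τ) :=
      le_mul_of_one_le_right hb (Real.one_le_exp (mul_nonneg hlam_nonneg hτ))
    linarith
  have hdecay : K * Real.exp (-lam * t) * (b * Real.exp (lam * τ) - a) ≤
      K * Real.exp (-lam * t) * -lam := by
    gcongr
    linarith
  have hpert : ε * Real.exp t * (b - a) ≤ 0 :=
    mul_nonpos_of_nonneg_of_nonpos (by positivity) (sub_nonpos.2 hba)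
  have hεt : 0 < ε * Real.exp t := by positivity
  calc
    _ ≤ -a * halanayBarrier lam K ε t +
          b * (K * Real.exp (-lam * t) * Real.exp (lam * τ) + ε * Real.exp t) := by
      gcongr
      exact sSup_image_Icc_le hτ hlam_nonneg hK hε.le t
    _ = K * Real.exp (-lam * t) * (b * Real.exp (lam * τ) - a) + ε * Real.exp t * (b - a) := by
      unfold halanayBarrier
      ring
    _ < -lam * (K * Real.exp (-lam * t)) + ε * Real.exp t := by linarith

end halanayBarrier

section Halanay

variable {a b τ lam : ℝ} {V V' : ℝ → ℝ}

theorem le_mul_exp_of_delay_differential_inequality (hb : 0 ≤ b) (hτ : 0 ≤ τ)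
    (hlam_nonneg : 0 ≤ lam) (hlam : lam ≤ a - b * Real.exp (lam * τ))
    (hVcont : ContinuousOn V (Ici 0))
    (hVderiv : ∀ t > 0, HasDerivWithinAt V (V' t) (Iic t) t)
    (hineq : ∀ t > 0, V' t ≤ -a * V t + b * sSup (V '' Icc (t - τ) t))
    {K : ℝ} (hK : 0 ≤ K) (hinit : ∀ s ∈ Icc (-τ) 0, V s ≤ K) :
    ∀ t ≥ 0, V t ≤ K * Real.exp (-lam * t) := by
  intro t ht
  have hbarrier : ∀ ε > 0, V t < halanayBarrier lam K ε t := fun ε hε =>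
    lt_of_delay_differential_inequality hb hτ hVcont
      (halanayBarrier.continuous lam K ε).continuousOn hVderiv
      (fun s _ => (halanayBarrier.hasDerivAt lam K ε s).hasDerivWithinAt) hineq
      (fun s _ => halanayBarrier.delay_differential_inequality hb hτ hlam_nonneg hlam hK hε s)
      (fun s hs => (hinit s hs).trans_lt (halanayBarrier.lt_of_nonpos hlam_nonneg hK hε hs.2)) t ht
  refine le_of_forall_pos_lt_add fun ε hε => ?_
  simpa [halanayBarrier, (Real.exp_pos t).ne'] using
    hbarrier (ε / Real.exp t) (div_pos hε (Real.exp_pos t))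

-- The maximum with `0` matters: if `b`, `τ` and `lam` are positive, the function equal to `-1` for
-- `t ≤ 0` and to `-exp (-(a - b) * t)` for `t ≥ 0` tends to `0` faster than `exp (-lam * t)`.
theorem statement_7_general (hb : 0 ≤ b) (hτ : 0 ≤ τ) (hlam_nonneg : 0 ≤ lam)
    (hlam : lam ≤ a - b * Real.exp (lam * τ)) (hVcont : ContinuousOn V (Ici (-τ)))
    (hVderiv : ∀ t > 0, HasDerivWithinAt V (V' t) (Iic t) t)
    (hineq : ∀ t > 0, V' t ≤ -a * V t + b * sSup (V '' Icc (t - τ) t)) :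
    ∀ t ≥ 0, V t ≤ max (sSup (V '' Icc (-τ) 0)) 0 * Real.exp (-lam * t) := by
  have hbdd : BddAbove (V '' Icc (-τ) 0) :=
    isCompact_Icc.bddAbove_image (hVcont.mono Icc_subset_Ici_self)
  exact le_mul_exp_of_delay_differential_inequality hb hτ hlam_nonneg hlam
    (hVcont.mono (Ici_subset_Ici.2 (neg_nonpos.2 hτ))) hVderiv hineq (le_max_right _ _)
    fun s hs => le_max_of_le_left (le_csSup hbdd (mem_image_of_mem V hs))

end Halanay

/-- Halanay-type inequality ([44, Lemma 3] as used in the paper). -/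
theorem statement_7
    (a b τ : ℝ) (hab : b < a) (hb : 0 < b) (hτ : 0 < τ)
    (lam : ℝ) (hlam_pos : 0 < lam) (hlam : lam = a - b * Real.exp (lam * τ))
    (V V' : ℝ → ℝ)
    (hVnonneg : ∀ t ∈ Ici (-τ), 0 ≤ V t)
    (hVcont : ContinuousOn V (Ici (-τ)))
    (hVderiv : ∀ t > (0 : ℝ), HasDerivAt V (V' t) t)
    (hineq : ∀ t > (0 : ℝ),
      V' t ≤ -a * V t + b * sSup (V '' Icc (t - τ) t)) :
    ∀ t ≥ (0 : ℝ), V t ≤ sSup (V '' Icc (-τ) 0) * Real.exp (-lam * t) := by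
  have hsup : 0 ≤ sSup (V '' Icc (-τ) 0) :=
    Real.sSup_nonneg (forall_mem_image.2 fun s hs => hVnonneg s hs.1)
  simpa only [max_eq_left hsup] using statement_7_general hb.le hτ.le hlam_pos.le hlam.le hVcont
    (fun t ht => (hVderiv t ht).hasDerivWithinAt) hineq
end

section
/- Let s = √1785 and define u₊ : ℝ → ℝ by u₊(x) = [200(e^{−s} − 1)/(357(e^{s} − e^{−s}))]·e^{s x} − [200(e^{s} − 1)/(357(e^{s} − e^{−s}))]·e^{−s x} + 200/357. Then u₊(0) = 0, u₊(1) = 0, u₊″(x) = 1785·u₊(x) − 1000 for all x ∈ ℝ, and u₊ is a nontrivial solution of this boundary value problem, i.e. there exists x ∈ (0,1) with u₊(x) ≠ 0. -/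
/-!
The affine equation `u″ = s² (u - K)` has the constant solution `K`, and both it and the Dirichlet
conditions on `[0, L]` are invariant under reflection about `L / 2`. So the solution is `K` minus
the multiple of `cosh (s (x - L / 2))` that equals `K` at the endpoints. The exponential formula of
the theorem is this function expanded in `e^{s x}` and `e^{-s x}`, with `s² = 1785`, `L = 1` and
`K = 1000 / 1785 = 200 / 357`. Since `cosh` is even and strictly increasing on `[0, ∞)`, the
solution vanishes only at the endpoints.
-/

open Real

theorem hasDerivAt_mul_sub_const (a c x : ℝ) : HasDerivAt (fun y ↦ a * (y - c)) a x := by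
  simpa using ((hasDerivAt_id' x).sub_const c).const_mul a

theorem cosh_eq_cosh_iff_abs_eq_abs {x y : ℝ} : cosh x = cosh y ↔ |x| = |y| := by
  simp only [le_antisymm_iff, cosh_le_cosh]

theorem exp_sub_one_div_exp_sub_exp_neg {t : ℝ} (ht : t ≠ 0) :
    (exp t - 1) / (exp t - exp (-t)) = exp (t / 2) / (2 * cosh (t / 2)) := by
  have h_ne : exp t - exp (-t) ≠ 0 :=
    sub_ne_zero.mpr (exp_injective.ne (self_ne_neg.mpr ht))
  have h_pos : exp t * exp (-(t / 2)) = exp (t / 2) := by rw [← exp_add]; congr 1; ring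
  have h_neg : exp (t / 2) * exp (-t) = exp (-(t / 2)) := by rw [← exp_add]; congr 1; ring
  rw [div_eq_div_iff h_ne (by positivity), cosh_eq]
  linear_combination h_pos + h_neg

/-- The solution of the Dirichlet problem `u″ = s² (u - K)`, `u(0) = u(L) = 0`, written as a
hyperbolic cosine centred at the midpoint of `[0, L]`. This form has no singularity at `s = 0` or
`L = 0`. -/
noncomputable def dirichletSolution (s L K x : ℝ) : ℝ :=
  K * (1 - cosh (s * (x - L / 2)) / cosh (s * L / 2))

theorem hasDerivAt_dirichletSolution (s L K x : ℝ) :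
    HasDerivAt (dirichletSolution s L K)
      (-(K * s) * (sinh (s * (x - L / 2)) / cosh (s * L / 2))) x :=
  ((((hasDerivAt_mul_sub_const s _ x).cosh.div_const _).const_sub 1).const_mul K).congr_deriv
    (by ring)

theorem hasDerivAt_deriv_dirichletSolution (s L K x : ℝ) :
    HasDerivAt (deriv (dirichletSolution s L K)) (s ^ 2 * (dirichletSolution s L K x - K)) x := by
  rw [deriv_eq (hasDerivAt_dirichletSolution s L K)]
  exact (((hasDerivAt_mul_sub_const s _ x).sinh.div_const _).const_mul _).congr_deriv
    (by rw [dirichletSolution]; ring)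

section DirichletSolution

variable {s L K x : ℝ}

theorem cosh_mul_sub_half_eq_cosh_iff (hs : s ≠ 0) :
    cosh (s * (x - L / 2)) = cosh (s * L / 2) ↔ x = 0 ∨ x = L :=
  calc cosh (s * (x - L / 2)) = cosh (s * L / 2)
      ↔ |s * (x - L / 2)| = |s * (L / 2)| := by rw [cosh_eq_cosh_iff_abs_eq_abs, mul_div_assoc]
    _ ↔ |x - L / 2| = |L / 2| := by
        rw [abs_mul, abs_mul, mul_right_inj' (abs_ne_zero.mpr hs)]
    _ ↔ x = 0 ∨ x = L := by
        rw [abs_eq_abs, or_comm, sub_eq_iff_eq_add, sub_eq_iff_eq_add, neg_add_cancel, add_halves]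

theorem dirichletSolution_eq_zero_iff (hs : s ≠ 0) (hK : K ≠ 0) :
    dirichletSolution s L K x = 0 ↔ x = 0 ∨ x = L := by
  rw [dirichletSolution, mul_eq_zero_iff_left hK, sub_eq_zero, eq_comm,
    div_eq_one_iff_eq (cosh_pos _).ne', cosh_mul_sub_half_eq_cosh_iff hs]

theorem exp_combination_eq_dirichletSolution (hs : s ≠ 0) (hL : L ≠ 0) :
    K * ((exp (-s * L) - 1) / (exp (s * L) - exp (-s * L))) * exp (s * x)
      - K * ((exp (s * L) - 1) / (exp (s * L) - exp (-s * L))) * exp (-s * x) + K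
      = dirichletSolution s L K x := by
  have h_coeff := exp_sub_one_div_exp_sub_exp_neg (mul_ne_zero hs hL)
  have h_coeff_neg : (exp (-(s * L)) - 1) / (exp (s * L) - exp (-(s * L)))
      = -(exp (-(s * L / 2)) / (2 * cosh (s * L / 2))) := by
    have h := exp_sub_one_div_exp_sub_exp_neg (neg_ne_zero.mpr (mul_ne_zero hs hL))
    rw [neg_neg, neg_div, cosh_neg] at h
    rw [← h, ← div_neg, neg_sub]
  have h_cosh : 2 * cosh (s * (x - L / 2))
      = exp (-(s * L / 2)) * exp (s * x) + exp (s * L / 2) * exp (-(s * x)) := by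
    rw [cosh_eq, ← exp_add, ← exp_add]
    ring_nf
  rw [neg_mul, neg_mul, h_coeff, h_coeff_neg, dirichletSolution]
  linear_combination (K / (2 * cosh (s * L / 2))) * h_cosh

theorem statement_8_general (hs : s ≠ 0) (hL : L ≠ 0) (hK : K ≠ 0) {u : ℝ → ℝ}
    (hu : ∀ x, u x = K * ((exp (-s * L) - 1) / (exp (s * L) - exp (-s * L))) * exp (s * x)
      - K * ((exp (s * L) - 1) / (exp (s * L) - exp (-s * L))) * exp (-s * x) + K) :
    (∀ x, u x = 0 ↔ x = 0 ∨ x = L) ∧ ∀ x, deriv (deriv u) x = s ^ 2 * (u x - K) := by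
  obtain rfl : u = dirichletSolution s L K :=
    funext fun x ↦ (hu x).trans (exp_combination_eq_dirichletSolution hs hL)
  exact ⟨fun _ ↦ dirichletSolution_eq_zero_iff hs hK,
    fun x ↦ (hasDerivAt_deriv_dirichletSolution s L K x).deriv⟩

end DirichletSolution

/-- The explicit nontrivial stationary solution (3.35) of the boundary value
problem (3.34): u″ = 1785 u − 1000 on (0,1), u(0) = u(1) = 0. -/
theorem statement_8
    (s : ℝ) (hs : s = Real.sqrt 1785)
    (u : ℝ → ℝ)
    (hu : ∀ x : ℝ, u x =
      (200 * (Real.exp (-s) - 1) / (357 * (Real.exp s - Real.exp (-s)))) * Real.exp (s * x)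
      - (200 * (Real.exp s - 1) / (357 * (Real.exp s - Real.exp (-s)))) * Real.exp (-s * x)
      + 200 / 357) :
    u 0 = 0 ∧ u 1 = 0 ∧ (∀ x : ℝ, deriv (deriv u) x = 1785 * u x - 1000) ∧
      ∃ x ∈ Set.Ioo (0 : ℝ) 1, u x ≠ 0 := by
  have hs_sq : s ^ 2 = 1785 := by rw [hs, sq_sqrt (by norm_num)]
  obtain ⟨h_zero, h_ode⟩ := statement_8_general (s := s) (L := 1) (K := 200 / 357)
    (by rintro rfl; norm_num at hs_sq) one_ne_zero (by norm_num)
    (by simpa only [mul_one, mul_div_mul_comm] using hu)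
  refine ⟨(h_zero 0).2 (.inl rfl), (h_zero 1).2 (.inr rfl), fun x ↦ ?_, 1 / 2, by norm_num, ?_⟩
  · rw [h_ode, hs_sq]
    ring
  · norm_num [h_zero]
end

section
/- Let k > 0, let F : ℝ → ℝ be defined by F(u) = (9k/4)|u|^{4/3} + 2k·u + k/4 for u ≤ −1, F(u) = (k/2)u² for −1 ≤ u ≤ 1, and F(u) = (9k/4)u^{4/3} − 2k·u + k/4 for u ≥ 1. Then F(u) ≤ (k/2)·u² for every u ∈ ℝ, with equality F(u) = (k/2)·u² whenever |u| ≤ 1. -/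
/-!
For `1 ≤ u` and `0 < k`, the inequality `F u ≤ (k / 2) * u ^ 2` says exactly that `u ^ (4 / 3)` is
at most its second-order Taylor polynomial at `1`. Such a bound holds for every exponent in
`[1, 2]`, since differentiating it gives Bernoulli's inequality for an exponent in `[0, 1]`. The
branch `u ≤ -1` is the reflection of the branch `1 ≤ u`.
-/

theorem rpow_one_add_le_one_add_mul_add_mul_sq {s p : ℝ} (hs : 0 ≤ s) (hp₁ : 1 ≤ p)
    (hp₂ : p ≤ 2) : (1 + s) ^ p ≤ 1 + p * s + p * (p - 1) / 2 * s ^ 2 := by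
  let remainder (x : ℝ) : ℝ := 1 + p * x + p * (p - 1) / 2 * x ^ 2 - (1 + x) ^ p
  have hasDerivAt_remainder (x : ℝ) :
      HasDerivAt remainder (p * (1 + (p - 1) * x - (1 + x) ^ (p - 1))) x := by
    have h_linear : HasDerivAt (fun y ↦ 1 + p * y) p x := by
      simpa only [mul_one] using ((hasDerivAt_id' x).const_mul p).const_add 1
    have h_quadratic := (hasDerivAt_pow 2 x).const_mul (p * (p - 1) / 2)
    have h_rpow := ((hasDerivAt_id' x).const_add 1).rpow_const (Or.inr hp₁)
    exact ((h_linear.add h_quadratic).sub h_rpow).congr_deriv (by push_cast; ring)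
  have monotoneOn_remainder : MonotoneOn remainder (Set.Ici 0) := by
    refine monotoneOn_of_hasDerivWithinAt_nonneg (convex_Ici 0)
      (fun x _ ↦ (hasDerivAt_remainder x).continuousAt.continuousWithinAt)
      (fun x _ ↦ (hasDerivAt_remainder x).hasDerivWithinAt) fun x hx ↦ ?_
    have hx₀ : 0 ≤ x := interior_subset hx
    have bernoulli : (1 + x) ^ (p - 1) ≤ 1 + (p - 1) * x :=
      rpow_one_add_le_one_add_mul_self (by linarith) (by linarith) (by linarith)
    exact mul_nonneg (by linarith) (sub_nonneg.mpr bernoulli)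
  have remainder_zero : remainder 0 = 0 := by simp [remainder]
  exact sub_nonneg.mp (remainder_zero ▸ monotoneOn_remainder Set.self_mem_Ici hs hs)

theorem mul_rpow_four_thirds_sub_le_mul_sq {k u : ℝ} (hk : 0 ≤ k) (hu : 1 ≤ u) :
    9 * k / 4 * u ^ ((4 : ℝ) / 3) - 2 * k * u + k / 4 ≤ k / 2 * u ^ 2 := by
  have taylor := rpow_one_add_le_one_add_mul_add_mul_sq (p := 4 / 3) (sub_nonneg.mpr hu)
    (by norm_num) (by norm_num)
  rw [add_sub_cancel] at taylor
  calc
    9 * k / 4 * u ^ ((4 : ℝ) / 3) - 2 * k * u + k / 4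
      ≤ 9 * k / 4 * (1 + 4 / 3 * (u - 1) + 4 / 3 * (4 / 3 - 1) / 2 * (u - 1) ^ 2)
          - 2 * k * u + k / 4 := by gcongr
    _ = k / 2 * u ^ 2 := by ring

/-- Pointwise comparison F(u) ≤ (k/2)u², with equality for |u| ≤ 1,
used in the proof of Statement 2 of the paper. -/
theorem statement_14
    (k : ℝ) (hk : 0 < k) (F : ℝ → ℝ)
    (hF₁ : ∀ u : ℝ, u ≤ -1 → F u = (9 * k / 4) * |u| ^ ((4 : ℝ) / 3) + 2 * k * u + k / 4)
    (hF₂ : ∀ u : ℝ, -1 ≤ u → u ≤ 1 → F u = (k / 2) * u ^ 2)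
    (hF₃ : ∀ u : ℝ, 1 ≤ u → F u = (9 * k / 4) * u ^ ((4 : ℝ) / 3) - 2 * k * u + k / 4) :
    (∀ u : ℝ, F u ≤ (k / 2) * u ^ 2) ∧ ∀ u : ℝ, |u| ≤ 1 → F u = (k / 2) * u ^ 2 := by
  have eq_of_abs_le (u : ℝ) (hu : |u| ≤ 1) : F u = k / 2 * u ^ 2 :=
    hF₂ u (abs_le.mp hu).1 (abs_le.mp hu).2
  refine ⟨fun u ↦ ?_, eq_of_abs_le⟩
  rcases le_total |u| 1 with hu | hu
  · exact (eq_of_abs_le u hu).le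
  rcases le_abs'.mp hu with hu_neg | hu_pos
  · calc
      F u = 9 * k / 4 * |u| ^ ((4 : ℝ) / 3) - 2 * k * |u| + k / 4 := by
        rw [hF₁ u hu_neg, abs_of_nonpos (by linarith)]
        ring
      _ ≤ k / 2 * |u| ^ 2 := mul_rpow_four_thirds_sub_le_mul_sq hk.le hu
      _ = k / 2 * u ^ 2 := by rw [sq_abs]
  · rw [hF₃ u hu_pos]
    exact mul_rpow_four_thirds_sub_le_mul_sq hk.le hu_pos
end

section
/- Let n ≥ 1, let l₁, …, lₙ > 0, and let Ω = { x ∈ ℝⁿ : |xᵢ| < lᵢ for all i } be the open cube. Let μ : ℝⁿ → ℝ be continuously differentiable and vanish on the boundary of Ω, i.e. μ(x) = 0 for all x ∈ ∂Ω. Then for each index i, ∫_Ω μ(x)² dx ≤ lᵢ² · ∫_Ω (∂μ/∂xᵢ)(x)² dx. -/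
open MeasureTheory

/-!
Multiplying by an indicator turns the problem on `Ω` into one on a full line: if `u = 0` on the
frontier of `U ⊆ ℝ`, then `‖u‖ ^ 2` vanishes there to second order, so its extension by zero is
differentiable and no information on the shape of `U` is needed.

If `U` lies in an interval of width less than `π * c` centred at `m`, then
`t x = tan ((x - m) / c)` is smooth near it and solves the Riccati equation `c * t' = 1 + t ^ 2`, so
`c ^ 2 * ‖u'‖ ^ 2 - ‖u‖ ^ 2 + (c * t * ‖u‖ ^ 2)' = ‖t • u + c • u'‖ ^ 2 ≥ 0`.
Integrating over `U` kills the derivative. Letting `c` decrease gives the inequality for width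
`π * c`, and Fubini in the `i`-th coordinate gives it on domains of `ℝⁿ` bounded in that direction.
The box has width `2 * l i ≤ π * l i`.
-/

open Filter Set
open scoped ENNReal RealInnerProductSpace Topology

section ZeroExtension

theorem hasDerivAt_indicator_of_frontier_eq_zero {𝕜 F : Type*} [NontriviallyNormedField 𝕜]
    [NormedAddCommGroup F] [NormedSpace 𝕜 F] {s : Set 𝕜} {f f' : 𝕜 → F} {x : 𝕜}
    (hf : x ∈ closure s → HasDerivAt f (f' x) x) (h₀ : x ∈ frontier s → f x = 0 ∧ f' x = 0) :
    HasDerivAt (s.indicator f) (s.indicator f' x) x := by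
  by_cases hcl : x ∈ closure s
  · by_cases hint : x ∈ interior s
    · rw [indicator_of_mem (interior_subset hint)]
      exact (hf hcl).congr_of_eventuallyEq
        (eventually_of_mem (mem_interior_iff_mem_nhds.1 hint) fun y hy ↦ indicator_of_mem hy f)
    · obtain ⟨hfx, hf'x⟩ := h₀ ⟨hcl, hint⟩
      have hf_isLittleO := hasDerivAt_iff_isLittleO.1 (hf hcl)
      have hfx_indicator : s.indicator f x = 0 := by simp [hfx]
      have hf'x_indicator : s.indicator f' x = 0 := by simp [hf'x]
      rw [hasDerivAt_iff_isLittleO]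
      simp only [hfx, hf'x, hfx_indicator, hf'x_indicator, smul_zero, sub_zero] at hf_isLittleO ⊢
      exact (Asymptotics.isBigO_of_le _ fun y ↦
        norm_indicator_le_norm_self f y).trans_isLittleO hf_isLittleO
  · rw [indicator_of_notMem fun hx ↦ hcl (subset_closure hx)]
    refine (hasDerivAt_const x 0).congr_of_eventuallyEq
      (eventually_of_mem (isClosed_closure.isOpen_compl.mem_nhds hcl) fun y hy ↦ ?_)
    exact indicator_of_notMem (fun hys ↦ hy (subset_closure hys)) f

theorem setIntegral_nonneg_of_hasDerivAt_le {s : Set ℝ} {f f' φ : ℝ → ℝ}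
    (hs : MeasurableSet s) (hbdd : Bornology.IsBounded s)
    (hf : ∀ x ∈ closure s, HasDerivAt f (f' x) x)
    (h₀ : ∀ x ∈ frontier s, f x = 0 ∧ f' x = 0)
    (hφ : IntegrableOn φ s) (hle : ∀ x ∈ s, f' x ≤ φ x) : 0 ≤ ∫ x in s, φ x := by
  obtain ⟨r, hr, hsub⟩ := hbdd.subset_ball_lt 0 0
  rw [Real.ball_eq_Ioo, zero_sub, zero_add] at hsub
  have hderiv (x : ℝ) : HasDerivAt (s.indicator f) (s.indicator f' x) x :=
    hasDerivAt_indicator_of_frontier_eq_zero (hf x) (h₀ x)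
  have hleft : s.indicator f (-r) = 0 := indicator_of_notMem (fun h ↦ (hsub h).1.false) f
  have hright : s.indicator f r = 0 := indicator_of_notMem (fun h ↦ (hsub h).2.false) f
  calc 0 = s.indicator f r - s.indicator f (-r) := by rw [hleft, hright, sub_zero]
    _ ≤ ∫ x in -r..r, s.indicator φ x :=
      intervalIntegral.sub_le_integral_of_hasDeriv_right_of_le (by linarith)
        (fun x _ ↦ (hderiv x).continuousAt.continuousWithinAt)
        (fun x _ ↦ (hderiv x).hasDerivWithinAt)
        ((integrable_indicator_iff hs).2 hφ).integrableOn
        (fun x _ ↦ indicator_le_indicator' fun hx ↦ hle x hx)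
    _ = ∫ x in s, φ x := by
      rw [intervalIntegral.integral_of_le (by linarith), setIntegral_indicator hs,
        inter_eq_self_of_subset_right (hsub.trans Ioo_subset_Ioc_self)]

end ZeroExtension

section Integrability

variable {α F : Type*} [MeasurableSpace α] [NormedAddCommGroup F] {ν : Measure α} {f : α → F}

theorem integrableOn_of_continuousOn_closure [PseudoMetricSpace α] [ProperSpace α]
    [OpensMeasurableSpace α] [IsFiniteMeasureOnCompacts ν] {s : Set α}
    (hs : Bornology.IsBounded s) (hf : ContinuousOn f (closure s)) : IntegrableOn f s ν :=
  (hf.integrableOn_of_subset_isCompact hs.isCompact_closure isClosed_closure.measurableSet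
    subset_rfl hs.isCompact_closure.measure_ne_top).mono_set subset_closure

theorem lintegral_enorm_sq_eq_ofReal_integral (hf : Integrable (fun x ↦ ‖f x‖ ^ 2) ν) :
    ∫⁻ x, ‖f x‖ₑ ^ 2 ∂ν = ENNReal.ofReal (∫ x, ‖f x‖ ^ 2 ∂ν) := by
  rw [ofReal_integral_eq_lintegral_ofReal hf (ae_of_all _ fun x ↦ sq_nonneg _)]
  simp only [ENNReal.ofReal_pow (norm_nonneg _), ofReal_norm]

end Integrability

section Line

variable {E : Type*} [NormedAddCommGroup E] [InnerProductSpace ℝ E]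

theorem hasDerivAt_mul_tan_mul_norm_sq {u : ℝ → E} {u' : E} {m c x : ℝ} (hc : c ≠ 0)
    (hcos : Real.cos ((x - m) / c) ≠ 0) (hu : HasDerivAt u u' x) :
    HasDerivAt (fun y ↦ c * Real.tan ((y - m) / c) * ‖u y‖ ^ 2)
      ((1 + Real.tan ((x - m) / c) ^ 2) * ‖u x‖ ^ 2
        + 2 * c * Real.tan ((x - m) / c) * ⟪u x, u'⟫) x := by
  have htan : HasDerivAt Real.tan (1 + Real.tan ((x - m) / c) ^ 2) ((x - m) / c) := by
    simpa [← Real.inv_one_add_tan_sq hcos] using Real.hasDerivAt_tan hcos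
  have hlin : HasDerivAt (fun y ↦ (y - m) / c) (1 / c) x :=
    ((hasDerivAt_id x).sub_const m).div_const c
  refine (((htan.comp x hlin).const_mul c).mul hu.norm_sq).congr_deriv ?_
  simp only [Function.comp_apply]
  field_simp

theorem norm_sq_sub_sq_mul_norm_sq_le (v w : E) (t c : ℝ) :
    ‖v‖ ^ 2 - c ^ 2 * ‖w‖ ^ 2 ≤ (1 + t ^ 2) * ‖v‖ ^ 2 + 2 * c * t * ⟪v, w⟫ := by
  have hsq : ‖t • v + c • w‖ ^ 2
      = t ^ 2 * ‖v‖ ^ 2 + 2 * c * t * ⟪v, w⟫ + c ^ 2 * ‖w‖ ^ 2 := by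
    rw [norm_add_sq_real, norm_smul, norm_smul, real_inner_smul_left, real_inner_smul_right,
      mul_pow, mul_pow, Real.norm_eq_abs, Real.norm_eq_abs, sq_abs, sq_abs]
    ring
  linarith [sq_nonneg ‖t • v + c • w‖]

variable {U : Set ℝ} {u : ℝ → E} {a b c : ℝ}

theorem integrableOn_norm_sq_of_differentiableAt_closure (hU : Bornology.IsBounded U)
    (hu : ∀ x ∈ closure U, DifferentiableAt ℝ u x) : IntegrableOn (fun x ↦ ‖u x‖ ^ 2) U :=
  integrableOn_of_continuousOn_closure hU fun x hx ↦
    ((hu x hx).continuousAt.norm.pow 2).continuousWithinAt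

theorem setIntegral_norm_sq_le_deriv_of_sub_lt (hU : MeasurableSet U) (hsub : U ⊆ Icc a b)
    (hc : 0 < c) (habc : b - a < Real.pi * c) (hu : ∀ x ∈ closure U, DifferentiableAt ℝ u x)
    (h₀ : ∀ x ∈ frontier U, u x = 0) (hint : IntegrableOn (fun x ↦ ‖deriv u x‖ ^ 2) U) :
    ∫ x in U, ‖u x‖ ^ 2 ≤ c ^ 2 * ∫ x in U, ‖deriv u x‖ ^ 2 := by
  set m := (a + b) / 2 with hm
  have hbdd : Bornology.IsBounded U := (Metric.isBounded_Icc a b).subset hsub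
  have hcos (x : ℝ) (hx : x ∈ closure U) : Real.cos ((x - m) / c) ≠ 0 := by
    obtain ⟨hax, hxb⟩ := closure_minimal hsub isClosed_Icc hx
    refine (Real.cos_pos_of_mem_Ioo ⟨?_, ?_⟩).ne'
    · rw [lt_div_iff₀ hc]
      linarith
    · rw [div_lt_iff₀ hc]
      linarith
  have hintu := integrableOn_norm_sq_of_differentiableAt_closure hbdd hu
  have hnonneg : 0 ≤ ∫ x in U, (c ^ 2 * ‖deriv u x‖ ^ 2 - ‖u x‖ ^ 2) := by
    refine setIntegral_nonneg_of_hasDerivAt_le hU hbdd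
      (fun x hx ↦ (hasDerivAt_mul_tan_mul_norm_sq hc.ne' (hcos x hx) (hu x hx).hasDerivAt).neg)
      (fun x hx ↦ by simp [h₀ x hx]) ((hint.const_mul _).sub hintu) (fun x _ ↦ ?_)
    linarith [norm_sq_sub_sq_mul_norm_sq_le (u x) (deriv u x) (Real.tan ((x - m) / c)) c]
  rwa [integral_sub (hint.const_mul _) hintu, integral_const_mul, sub_nonneg] at hnonneg

theorem setIntegral_norm_sq_le_deriv (hU : MeasurableSet U) (hsub : U ⊆ Icc a b)
    (hc : 0 ≤ c) (habc : b - a ≤ Real.pi * c) (hu : ∀ x ∈ closure U, DifferentiableAt ℝ u x)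
    (h₀ : ∀ x ∈ frontier U, u x = 0) (hint : IntegrableOn (fun x ↦ ‖deriv u x‖ ^ 2) U) :
    ∫ x in U, ‖u x‖ ^ 2 ≤ c ^ 2 * ∫ x in U, ‖deriv u x‖ ^ 2 := by
  have hlim : Tendsto (fun d ↦ d ^ 2 * ∫ x in U, ‖deriv u x‖ ^ 2) (𝓝[>] c)
      (𝓝 (c ^ 2 * ∫ x in U, ‖deriv u x‖ ^ 2)) :=
    ContinuousAt.continuousWithinAt (by fun_prop)
  refine ge_of_tendsto hlim ?_
  filter_upwards [self_mem_nhdsWithin] with d (hcd : c < d)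
  exact setIntegral_norm_sq_le_deriv_of_sub_lt hU hsub (hc.trans_lt hcd)
    (habc.trans_lt (mul_lt_mul_of_pos_left hcd Real.pi_pos)) hu h₀ hint

theorem setLIntegral_enorm_sq_le_deriv [CompleteSpace E] (hU : MeasurableSet U)
    (hsub : U ⊆ Icc a b) (hc : 0 < c) (habc : b - a ≤ Real.pi * c)
    (hu : ∀ x ∈ closure U, DifferentiableAt ℝ u x) (h₀ : ∀ x ∈ frontier U, u x = 0) :
    ∫⁻ x in U, ‖u x‖ₑ ^ 2 ≤ ENNReal.ofReal (c ^ 2) * ∫⁻ x in U, ‖deriv u x‖ₑ ^ 2 := by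
  by_cases hfin : ∫⁻ x in U, ‖deriv u x‖ₑ ^ 2 = ∞
  · rw [hfin, ENNReal.mul_top (ENNReal.ofReal_pos.2 (pow_pos hc 2)).ne']
    exact le_top
  have hint : IntegrableOn (fun x ↦ ‖deriv u x‖ ^ 2) U := by
    refine ⟨((stronglyMeasurable_deriv u).norm.pow 2).aestronglyMeasurable, ?_⟩
    simpa [HasFiniteIntegral, lt_top_iff_ne_top] using hfin
  have hintu := integrableOn_norm_sq_of_differentiableAt_closure
    ((Metric.isBounded_Icc a b).subset hsub) hu
  rw [lintegral_enorm_sq_eq_ofReal_integral hint, lintegral_enorm_sq_eq_ofReal_integral hintu,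
    ← ENNReal.ofReal_mul (sq_nonneg c)]
  exact ENNReal.ofReal_le_ofReal (setIntegral_norm_sq_le_deriv hU hsub hc.le habc hu h₀ hint)

end Line

section Slices

theorem setLIntegral_pi_le_of_forall_update_le {ι : Type*} [Fintype ι] [DecidableEq ι]
    {X : ι → Type*} [∀ j, MeasurableSpace (X j)] {ν : ∀ j, Measure (X j)} [∀ j, SigmaFinite (ν j)]
    {s : Set (∀ j, X j)} {f g : (∀ j, X j) → ℝ≥0∞} (i : ι) (hs : MeasurableSet s)
    (hf : Measurable (s.indicator f)) (hg : Measurable (s.indicator g))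
    (hfg : ∀ x, ∫⁻ y in Function.update x i ⁻¹' s, f (Function.update x i y) ∂ν i
      ≤ ∫⁻ y in Function.update x i ⁻¹' s, g (Function.update x i y) ∂ν i) :
    ∫⁻ x in s, f x ∂Measure.pi ν ≤ ∫⁻ x in s, g x ∂Measure.pi ν := by
  rw [← lintegral_indicator hs, ← lintegral_indicator hs]
  refine lintegral_le_of_lmarginal_le {i} hf hg fun x ↦ ?_
  have hslice := hfg x
  rw [← lintegral_indicator (measurable_update x hs),
    ← lintegral_indicator (measurable_update x hs)] at hslice
  simp only [lmarginal_singleton]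
  exact hslice

theorem deriv_comp_update {ι F : Type*} [Finite ι] [DecidableEq ι] [NormedAddCommGroup F]
    [NormedSpace ℝ F] {f : (ι → ℝ) → F} {x : ι → ℝ} {i : ι} {y : ℝ}
    (hf : DifferentiableAt ℝ f (Function.update x i y)) :
    deriv (fun z ↦ f (Function.update x i z)) y
      = fderiv ℝ f (Function.update x i y) (Pi.single i 1) := by
  have := Fintype.ofFinite ι
  exact (hf.hasFDerivAt.comp_hasDerivAt y (hasDerivAt_update x i y)).deriv

theorem measurable_indicator_enorm_sq {α F : Type*} [TopologicalSpace α] [MeasurableSpace α]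
    [BorelSpace α] [NormedAddCommGroup F] {s : Set α} {f : α → F} (hs : MeasurableSet s)
    (hf : ContinuousOn f s) : Measurable (s.indicator fun x ↦ ‖f x‖ₑ ^ 2) := by
  classical
  rw [← piecewise_eq_indicator]
  exact ContinuousOn.measurable_piecewise (by fun_prop) continuousOn_const hs

end Slices

section Domain

variable {ι E : Type*} [DecidableEq ι] [NormedAddCommGroup E] [InnerProductSpace ℝ E]
  [CompleteSpace E] {Ω : Set (ι → ℝ)} {i : ι} {a b c : ℝ} {μ : (ι → ℝ) → E}

theorem setLIntegral_update_enorm_sq_le_fderiv [Finite ι] (hΩ : MeasurableSet Ω)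
    (hsub : ∀ x ∈ Ω, x i ∈ Icc a b) (hc : 0 < c) (habc : b - a ≤ Real.pi * c)
    (hμ : ∀ x ∈ closure Ω, DifferentiableAt ℝ μ x) (h₀ : ∀ x ∈ frontier Ω, μ x = 0)
    (x : ι → ℝ) :
    ∫⁻ y in Function.update x i ⁻¹' Ω, ‖μ (Function.update x i y)‖ₑ ^ 2
      ≤ ENNReal.ofReal (c ^ 2) * ∫⁻ y in Function.update x i ⁻¹' Ω,
          ‖fderiv ℝ μ (Function.update x i y) (Pi.single i 1)‖ₑ ^ 2 := by
  have := Fintype.ofFinite ι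
  have hupd : Continuous (Function.update x i) := continuous_const.update i continuous_id
  have hmeas : MeasurableSet (Function.update x i ⁻¹' Ω) := measurable_update x hΩ
  have hdiff (y : ℝ) (hy : y ∈ closure (Function.update x i ⁻¹' Ω)) :
      DifferentiableAt ℝ μ (Function.update x i y) :=
    hμ _ (hupd.closure_preimage_subset Ω hy)
  calc ∫⁻ y in Function.update x i ⁻¹' Ω, ‖μ (Function.update x i y)‖ₑ ^ 2
      ≤ ENNReal.ofReal (c ^ 2) * ∫⁻ y in Function.update x i ⁻¹' Ω,
          ‖deriv (fun z ↦ μ (Function.update x i z)) y‖ₑ ^ 2 :=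
        setLIntegral_enorm_sq_le_deriv hmeas (fun y hy ↦ by simpa using hsub _ hy) hc habc
          (fun y hy ↦ (hdiff y hy).comp y (hasDerivAt_update x i y).differentiableAt)
          (fun y hy ↦ h₀ _ (hupd.frontier_preimage_subset Ω hy))
    _ = _ := by
        rw [setLIntegral_congr_fun hmeas fun y hy ↦ ?_]
        rw [deriv_comp_update (hdiff y (subset_closure hy))]

theorem setLIntegral_enorm_sq_le_fderiv [Fintype ι] (hΩ : MeasurableSet Ω)
    (hsub : ∀ x ∈ Ω, x i ∈ Icc a b) (hc : 0 < c) (habc : b - a ≤ Real.pi * c)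
    (hμ : ∀ x ∈ closure Ω, DifferentiableAt ℝ μ x) (h₀ : ∀ x ∈ frontier Ω, μ x = 0) :
    ∫⁻ x in Ω, ‖μ x‖ₑ ^ 2
      ≤ ENNReal.ofReal (c ^ 2) * ∫⁻ x in Ω, ‖fderiv ℝ μ x (Pi.single i 1)‖ₑ ^ 2 := by
  borelize E
  have hcont : ContinuousOn μ Ω := fun x hx ↦
    (hμ x (subset_closure hx)).continuousAt.continuousWithinAt
  have hmeas : Measurable fun x ↦ ‖fderiv ℝ μ x (Pi.single i 1)‖ₑ ^ 2 :=
    (measurable_fderiv_apply_const ℝ μ _).enorm.pow_const 2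
  rw [← lintegral_const_mul _ hmeas]
  refine setLIntegral_pi_le_of_forall_update_le i hΩ (measurable_indicator_enorm_sq hΩ hcont)
    ((hmeas.const_mul _).indicator hΩ) fun x ↦ ?_
  rw [lintegral_const_mul _ (by exact hmeas.comp (measurable_update x))]
  exact setLIntegral_update_enorm_sq_le_fderiv hΩ hsub hc habc hμ h₀ x

theorem statement_18_general [Fintype ι] (hΩ : MeasurableSet Ω)
    (hsub : ∀ x ∈ Ω, x i ∈ Icc a b) (hc : 0 < c) (habc : b - a ≤ Real.pi * c)
    (hμ : ∀ x ∈ closure Ω, DifferentiableAt ℝ μ x) (h₀ : ∀ x ∈ frontier Ω, μ x = 0)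
    (hint : IntegrableOn (fun x ↦ ‖fderiv ℝ μ x (Pi.single i 1)‖ ^ 2) Ω) :
    ∫ x in Ω, ‖μ x‖ ^ 2 ≤ c ^ 2 * ∫ x in Ω, ‖fderiv ℝ μ x (Pi.single i 1)‖ ^ 2 := by
  have hrhs : 0 ≤ c ^ 2 * ∫ x in Ω, ‖fderiv ℝ μ x (Pi.single i 1)‖ ^ 2 := by positivity
  by_cases hintμ : IntegrableOn (fun x ↦ ‖μ x‖ ^ 2) Ω
  · have hle := setLIntegral_enorm_sq_le_fderiv hΩ hsub hc habc hμ h₀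
    rwa [lintegral_enorm_sq_eq_ofReal_integral hintμ, lintegral_enorm_sq_eq_ofReal_integral hint,
      ← ENNReal.ofReal_mul (sq_nonneg c), ENNReal.ofReal_le_ofReal_iff hrhs] at hle
  · rwa [integral_undef hintμ]

end Domain

section Box

variable {ι : Type*} [Finite ι]

theorem isOpen_setOf_forall_abs_lt (l : ι → ℝ) :
    IsOpen {x : ι → ℝ | ∀ i, |x i| < l i} := by
  rw [ofPred_forall]
  exact isOpen_iInter_of_finite fun i ↦ isOpen_lt (continuous_apply i).abs continuous_const

theorem isBounded_setOf_forall_abs_lt (l : ι → ℝ) :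
    Bornology.IsBounded {x : ι → ℝ | ∀ i, |x i| < l i} := by
  have := Fintype.ofFinite ι
  exact (Metric.isBounded_Icc (-l) l).subset fun _ hx ↦
    ⟨fun i ↦ (abs_lt.1 (hx i)).1.le, fun i ↦ (abs_lt.1 (hx i)).2.le⟩

end Box

/-- The Poincaré-type inequality of Remark 15 of the paper: for a C¹ function
vanishing on the boundary of the cube Ω = {x : |xᵢ| < lᵢ},
∫_Ω μ² ≤ lᵢ² ∫_Ω (∂μ/∂xᵢ)². -/
theorem statement_18
    (n : ℕ) (hn : 1 ≤ n) (l : Fin n → ℝ) (hl : ∀ i, 0 < l i)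
    (Ω : Set (Fin n → ℝ)) (hΩ : Ω = {x : Fin n → ℝ | ∀ i, |x i| < l i})
    (μ : (Fin n → ℝ) → ℝ) (hμ : ContDiff ℝ 1 μ)
    (hbound : ∀ x ∈ frontier Ω, μ x = 0) (i : Fin n) :
    ∫ x in Ω, (μ x) ^ 2 ≤ (l i) ^ 2 * ∫ x in Ω, (fderiv ℝ μ x (Pi.single i 1)) ^ 2 := by
  subst hΩ
  have hderiv : Continuous fun x ↦ ‖fderiv ℝ μ x (Pi.single i 1)‖ ^ 2 :=
    ((hμ.continuous_fderiv one_ne_zero).clm_apply continuous_const).norm.pow 2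
  simpa only [Real.norm_eq_abs, sq_abs] using
    statement_18_general (isOpen_setOf_forall_abs_lt l).measurableSet
      (fun x hx ↦ abs_le.1 (hx i).le) (hl i) (by nlinarith [Real.pi_gt_three, hl i])
      (fun x _ ↦ hμ.differentiable one_ne_zero x) hbound
      (integrableOn_of_continuousOn_closure (isBounded_setOf_forall_abs_lt l) hderiv.continuousOn)
end

section
/- Let τ̄ > 0, let d : ℝ → ℝ be a delay function with 0 ≤ d(t) ≤ τ̄ for all t, and let λ > 0 be the unique positive solution of λ = 3.575 − 0.005·e^{λτ̄}. Let y : ℝ → ℝ be continuous on [−τ̄, ∞) and bounded on [−τ̄, 0], differentiable on (0, ∞), and satisfy for all t > 0 the delay differential equation y′(t) = −1.79·y(t) + 0.005·y(t − d(t)). Then y(t)² ≤ ( sup_{s ∈ [−τ̄, 0]} y(s)² )·e^{−λ t} for all t ≥ 0; in particular y(t) → 0 exponentially with rate λ/2. -/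
open Set

/-!
With the Lyapunov function `V = ‖y‖²`, Young's inequality turns the delay equation into
`V' ≤ -(2p - |q|) V + |q| sup_{[t-τ,t]} V`, so the decay is an instance of Halanay's inequality.
For the latter, compare `V` with `c e^{-μt}`, where `c > M` and `μ < λ`: at a first contact the
history of `V` lies below this decreasing barrier, so its supremum is at most `e^{μτ}` times the
current value, and `V` then decreases strictly faster than the barrier. Contact is therefore
impossible; let `c → M` and `μ → λ`.
-/

open Filter Topology
open scoped RealInnerProductSpace

theorem exists_first_zero {g : ℝ → ℝ} {a b : ℝ} (hab : a ≤ b) (hg : ContinuousOn g (Icc a b))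
    (ha : g a < 0) (hb : 0 ≤ g b) :
    ∃ t ∈ Ioc a b, g t = 0 ∧ ∀ s ∈ Ico a t, g s < 0 := by
  have hcompact : IsCompact (Icc a b ∩ g ⁻¹' {0}) :=
    isCompact_Icc.of_isClosed_subset
      (hg.preimage_isClosed_of_isClosed isClosed_Icc isClosed_singleton) inter_subset_left
  have hnonempty : (Icc a b ∩ g ⁻¹' {0}).Nonempty :=
    intermediate_value_Icc hab hg ⟨ha.le, hb⟩
  obtain ⟨t, ⟨htab, hgt : g t = 0⟩, hleast⟩ := hcompact.exists_isLeast hnonempty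
  have hat : a < t := htab.1.lt_of_ne fun h => ha.ne (h ▸ hgt)
  refine ⟨t, ⟨hat, htab.2⟩, hgt, fun s hs => ?_⟩
  by_contra! hgs
  obtain ⟨r, hr, hgr⟩ := intermediate_value_Icc hs.1
    (hg.mono (Icc_subset_Icc_right (hs.2.le.trans htab.2))) ⟨ha.le, hgs⟩
  have htr : t ≤ r := hleast ⟨⟨hr.1, hr.2.trans (hs.2.le.trans htab.2)⟩, hgr⟩
  exact (htr.trans hr.2).not_gt hs.2

theorem neg_of_deriv_neg_at_first_zero {g : ℝ → ℝ} {a b : ℝ} (hab : a ≤ b)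
    (hg : ContinuousOn g (Icc a b)) (ha : g a < 0)
    (hderiv : ∀ t ∈ Ioc a b, g t = 0 → (∀ s ∈ Ico a t, g s < 0) →
      ∃ g' < 0, HasDerivWithinAt g g' (Iio t) t) :
    g b < 0 := by
  by_contra! hb
  obtain ⟨t, ht, hgt, hbefore⟩ := exists_first_zero hab hg ha hb
  obtain ⟨g', hg', hgd⟩ := hderiv t ht hgt hbefore
  have hslope : ∀ᶠ s in 𝓝[<] t, slope g t s < 0 := hgd.limsup_slope_le' self_notMem_Iio hg'
  obtain ⟨s, hs, hst⟩ := (hslope.and (Ioo_mem_nhdsLT ht.1)).exists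
  have hslope_pos : 0 < slope g t s := by
    rw [slope_def_field, hgt, sub_zero]
    exact div_pos_of_neg_of_neg (hbefore s ⟨hst.1.le, hst.2⟩) (sub_neg.mpr hst.2)
  exact hs.not_gt hslope_pos

section Halanay

variable {V V' : ℝ → ℝ} {a b τ : ℝ}

theorem sSup_image_Icc_sub_le_exp_mul {μ c t : ℝ} (hτ : 0 ≤ τ) (hμ : 0 ≤ μ) (hc : 0 ≤ c)
    (hV : ∀ r ∈ Icc (t - τ) t, V r ≤ c * Real.exp (-μ * r)) :
    sSup (V '' Icc (t - τ) t) ≤ Real.exp (μ * τ) * (c * Real.exp (-μ * t)) := by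
  refine csSup_le ((nonempty_Icc.mpr (sub_le_self t hτ)).image V) ?_
  rintro _ ⟨r, hr, rfl⟩
  calc V r ≤ c * Real.exp (-μ * r) := hV r hr
    _ ≤ c * Real.exp (-μ * (t - τ)) := by
        gcongr c * Real.exp ?_
        exact mul_le_mul_of_nonpos_left hr.1 (neg_nonpos.mpr hμ)
    _ = Real.exp (μ * τ) * (c * Real.exp (-μ * t)) := by
        rw [mul_left_comm, ← Real.exp_add]
        ring_nf

theorem lt_mul_exp_of_halanay {μ c : ℝ} (hτ : 0 ≤ τ) (hb : 0 ≤ b) (hμ : 0 ≤ μ) (hc : 0 < c)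
    (hrate : μ < a - b * Real.exp (μ * τ)) (hV : ContinuousOn V (Ici 0))
    (hderiv : ∀ t > 0, HasDerivWithinAt V (V' t) (Iio t) t)
    (hbound : ∀ t > 0, V' t ≤ -a * V t + b * sSup (V '' Icc (t - τ) t))
    (hinit : ∀ s ∈ Icc (-τ) 0, V s < c) {t : ℝ} (ht : 0 ≤ t) :
    V t < c * Real.exp (-μ * t) := by
  let B : ℝ → ℝ := fun s => c * Real.exp (-μ * s)
  have hB_deriv (s : ℝ) : HasDerivAt B (-μ * B s) s :=
    ((hasDerivAt_const_mul (-μ)).exp.const_mul c).congr_deriv (by dsimp only [B]; ring)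
  have hinit_lt : ∀ s ∈ Icc (-τ) 0, V s < B s := fun s hs =>
    (hinit s hs).trans_le <| le_mul_of_one_le_right hc.le <|
      Real.one_le_exp (mul_nonneg_of_nonpos_of_nonpos (neg_nonpos.mpr hμ) hs.2)
  refine sub_neg.mp (neg_of_deriv_neg_at_first_zero (g := V - B) ht
    ((hV.mono Icc_subset_Ici_self).sub fun s _ => (hB_deriv s).continuousAt.continuousWithinAt)
    (sub_neg.mpr (hinit_lt 0 ⟨neg_nonpos.mpr hτ, le_rfl⟩)) fun s hs hcontact hbefore => ?_)
  have hVB : V s = B s := sub_eq_zero.mp hcontact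
  have hhistory : ∀ r ∈ Icc (s - τ) s, V r ≤ B r := fun r hr => by
    rcases hr.2.eq_or_lt with rfl | hrs
    · exact hVB.le
    rcases le_total r 0 with hr0 | hr0
    · exact (hinit_lt r ⟨by linarith [hr.1, hs.1], hr0⟩).le
    · exact (sub_neg.mp (hbefore r ⟨hr0, hrs⟩)).le
  have hsup : sSup (V '' Icc (s - τ) s) ≤ Real.exp (μ * τ) * B s :=
    sSup_image_Icc_sub_le_exp_mul hτ hμ hc.le hhistory
  refine ⟨V' s - -μ * B s, sub_neg.mpr ?_, (hderiv s hs.1).sub (hB_deriv s).hasDerivWithinAt⟩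
  calc V' s ≤ -a * B s + b * (Real.exp (μ * τ) * B s) := by
        rw [← hVB] at hsup ⊢
        exact (hbound s hs.1).trans (by gcongr)
    _ = -(a - b * Real.exp (μ * τ)) * B s := by ring
    _ < -μ * B s := by
        have : 0 < B s := mul_pos hc (Real.exp_pos _)
        gcongr

theorem le_mul_exp_of_halanay {lam M : ℝ} (hτ : 0 ≤ τ) (hb : 0 ≤ b) (hlam : 0 < lam) (hM : 0 ≤ M)
    (hrate : lam ≤ a - b * Real.exp (lam * τ)) (hV : ContinuousOn V (Ici 0))
    (hderiv : ∀ t > 0, HasDerivWithinAt V (V' t) (Iio t) t)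
    (hbound : ∀ t > 0, V' t ≤ -a * V t + b * sSup (V '' Icc (t - τ) t))
    (hinit : ∀ s ∈ Icc (-τ) 0, V s ≤ M) {t : ℝ} (ht : 0 ≤ t) :
    V t ≤ M * Real.exp (-lam * t) := by
  have hslower : ∀ μ ∈ Ioo 0 lam, ∀ c > M, V t < c * Real.exp (-μ * t) := fun μ hμ c hc => by
    have hμ_rate : μ < a - b * Real.exp (μ * τ) := by
      calc μ < lam := hμ.2
        _ ≤ a - b * Real.exp (lam * τ) := hrate
        _ ≤ a - b * Real.exp (μ * τ) := by gcongr; exact hμ.2.le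
    exact lt_mul_exp_of_halanay hτ hb hμ.1.le (hM.trans_lt hc) hμ_rate hV hderiv hbound
      (fun s hs => (hinit s hs).trans_lt hc) ht
  have hc_limit : ∀ c > M, V t ≤ c * Real.exp (-lam * t) := fun c hc => by
    have hcont : Continuous fun μ : ℝ => c * Real.exp (-μ * t) := by fun_prop
    refine ge_of_tendsto (hcont.continuousWithinAt (s := Iio lam)) ?_
    filter_upwards [Ioo_mem_nhdsLT hlam] with μ hμ using (hslower μ hμ c hc).le
  have hcont : Continuous fun c : ℝ => c * Real.exp (-lam * t) := by fun_prop
  refine ge_of_tendsto (hcont.continuousWithinAt (s := Ioi M)) ?_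
  filter_upwards [self_mem_nhdsWithin] with c hc using hc_limit c hc

end Halanay

section LinearDelayEquation

variable {E : Type*} [NormedAddCommGroup E] [InnerProductSpace ℝ E]

theorem two_mul_inner_smul_add_smul_le (p q : ℝ) (x z : E) :
    2 * ⟪x, -p • x + q • z⟫ ≤ -(2 * p - |q|) * ‖x‖ ^ 2 + |q| * ‖z‖ ^ 2 := by
  have hcross : q * ⟪x, z⟫ ≤ |q| * (‖x‖ * ‖z‖) :=
    (le_abs_self _).trans <| by
      rw [abs_mul]
      gcongr
      exact abs_real_inner_le_norm x z
  have hyoung : |q| * (2 * ‖x‖ * ‖z‖) ≤ |q| * (‖x‖ ^ 2 + ‖z‖ ^ 2) := by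
    gcongr
    exact two_mul_le_add_sq ‖x‖ ‖z‖
  rw [inner_add_right, real_inner_smul_right, real_inner_smul_right, real_inner_self_eq_norm_sq]
  linarith

theorem statement_19_general {τ p q lam : ℝ} {d : ℝ → ℝ} {y : ℝ → E}
    (hd : ∀ t > 0, 0 ≤ d t ∧ d t ≤ τ) (hlam_pos : 0 < lam)
    (hlam : lam ≤ 2 * p - |q| - |q| * Real.exp (lam * τ))
    (hycont : ContinuousOn y (Ici (-τ)))
    (hyderiv : ∀ t > 0, HasDerivAt y (-p • y t + q • y (t - d t)) t) :
    ∀ t ≥ 0, ‖y t‖ ^ 2 ≤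
      sSup ((fun s => ‖y s‖ ^ 2) '' Icc (-τ) 0) * Real.exp (-lam * t) := by
  set V : ℝ → ℝ := fun s => ‖y s‖ ^ 2
  have hτ : 0 ≤ τ := (hd 1 one_pos).1.trans (hd 1 one_pos).2
  have hVcont : ContinuousOn V (Ici (-τ)) := hycont.norm.pow 2
  have hV_le_sSup {r s t : ℝ} (hr : -τ ≤ r) (hs : s ∈ Icc r t) : V s ≤ sSup (V '' Icc r t) :=
    le_csSup (isCompact_Icc.bddAbove_image (hVcont.mono fun _ hu => hr.trans hu.1))
      (mem_image_of_mem V hs)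
  have hVbound : ∀ t > 0, 2 * ⟪y t, -p • y t + q • y (t - d t)⟫ ≤
      -(2 * p - |q|) * V t + |q| * sSup (V '' Icc (t - τ) t) := fun t ht =>
    (two_mul_inner_smul_add_smul_le p q (y t) (y (t - d t))).trans <| by
      obtain ⟨hd_nonneg, hd_le⟩ := hd t ht
      gcongr
      exact hV_le_sSup (by linarith) ⟨by linarith, by linarith⟩
  intro t ht
  exact le_mul_exp_of_halanay hτ (abs_nonneg q) hlam_pos
    (Real.sSup_nonneg (forall_mem_image.mpr fun s _ => sq_nonneg ‖y s‖)) hlam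
    (hVcont.mono (Ici_subset_Ici.mpr (neg_nonpos.mpr hτ)))
    (fun s hs => (hyderiv s hs).norm_sq.hasDerivWithinAt) hVbound
    (fun s hs => hV_le_sSup le_rfl hs) ht

end LinearDelayEquation

/-- Global exponential stability from the proof of Statement 1 of the paper:
for y′(t) = −1.79 y(t) + 0.005 y(t − d(t)) with bounded delay, one has
y(t)² ≤ (sup_{[−τ̄,0]} y²) e^{−λt}, where λ > 0 solves λ = 3.575 − 0.005 e^{λτ̄}. -/
theorem statement_19
    (τ' : ℝ) (hτ' : 0 < τ')
    (d : ℝ → ℝ) (hd : ∀ t : ℝ, 0 ≤ d t ∧ d t ≤ τ')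
    (lam : ℝ) (hlam_pos : 0 < lam)
    (hlam : lam = 3.575 - 0.005 * Real.exp (lam * τ'))
    (y : ℝ → ℝ)
    (hycont : ContinuousOn y (Ici (-τ')))
    (hybdd : ∃ M : ℝ, ∀ s ∈ Icc (-τ') 0, |y s| ≤ M)
    (hyderiv : ∀ t > (0 : ℝ),
      HasDerivAt y (-1.79 * y t + 0.005 * y (t - d t)) t) :
    ∀ t ≥ (0 : ℝ),
      (y t) ^ 2 ≤ sSup ((fun s => (y s) ^ 2) '' Icc (-τ') 0) * Real.exp (-lam * t) := by
  simpa only [Real.norm_eq_abs, sq_abs] using statement_19_general (p := 1.79) (q := 0.005)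
    (fun t _ => hd t) hlam_pos (by norm_num at hlam ⊢; exact hlam.le) hycont hyderiv
end
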